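/- (Okada's criterion, rational-valued case.) Let q ≥ 2 be an integer and let f : ℕ → ℚ be periodic with period q and satisfy Σ_{a=1}^q f(a) = 0, so that L(1,f) = Σ_{n≥1} f(n)/n converges. Let M(q) be the set of positive integers all of whose prime factors divide q, and for a prime p dividing q and an integer r ≥ 1 define ε(r,p) = v_p(r) if v_p(r) < v_p(q), and ε(r,p) = v_p(q) + 1/(p-1) otherwise, where v_p denotes the p-adic valuation. Then L(1,f) = 0 if and only if both of the following hold: (i) Σ_{m ∈ M(q)} f(am)/m = 0 for every integer a with 1 ≤ a < q and gcd(a,q) = 1; and (ii) Σ_{1 ≤ r ≤ q, gcd(r,q) > 1} f(r)·ε(r,p) = 0 for every prime divisor p of q. -/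

import Mathlib

open Filter Topology Finset

/-!
For `∑ f = 0` the value `L(1, f)` is a linear form in the numbers `log (1 - ζ)`, `ζ ≠ 1` a `q`-th
root of unity, whose coefficients (the discrete Fourier transform of `f`) lie in `ℚ(ζ_q)`. The
vanishing of a linear form in logarithms of algebraic numbers is invariant under Galois conjugation
of the coefficients. This is a case of Baker's theorem that Schneider's method reaches directly:
for `K` Galois over `ℚ` of degree `d`, if a nonzero form `y ↦ ∑ g, c g * ι (g y)` takes
logarithms of elements of `K` as values on all of `𝓞 K`, then the `d` values on an integral basis
force at least `d` nonzero `c g`. Hence `L(1, f) = 0` if and only if `L(1, f(u ·)) = 0` for every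
unit `u` of `ZMod q`.

Decompose `f` by the Dirichlet characters `χ` modulo `q`. If `Φ (u * j) = χ u * Φ j`, then
`L(s, Φ) = (∑_{m ∈ M(q)} Φ(m) m⁻ˢ) * L(s, χ)`. For `χ ≠ 1` the factor `L(1, χ)` is nonzero, which
leaves condition (i). For `χ = 1` the sum over `M(q)` vanishes because `ζ` has a pole at `1`; there
`Φ(n)` depends only on `gcd(n, q)`, so `L(s, Φ)` is a Dirichlet polynomial supported on the divisors
of `q` times `ζ(s)`, and `L(1, Φ)` is a rational combination of the `log p`, `p ∣ q`. These are
linearly independent over `ℚ`, and their coefficients are the sums of condition (ii).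
-/

section PowBounded

/-- The growth class in which Schneider's method compares its estimates: `x` is nonnegative and
at most `(A * n ^ m) ^ n` for some constant `A`. -/
def IsPowBounded {τ : Type*} (n : τ → ℕ) (m : ℕ) (x : τ → ℝ) : Prop :=
  (∀ t, 0 ≤ x t) ∧ ∃ A : ℝ, 0 ≤ A ∧ ∀ t, x t ≤ (A * n t ^ m) ^ n t

variable {τ : Type*} {n : τ → ℕ} {m m' : ℕ} {x y : τ → ℝ}

namespace IsPowBounded

theorem mul (hx : IsPowBounded n m x) (hy : IsPowBounded n m' y) :
    IsPowBounded n (m + m') fun t => x t * y t := by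
  obtain ⟨hx0, A, hA, hxA⟩ := hx
  obtain ⟨hy0, A', hA', hyA'⟩ := hy
  refine ⟨fun t => mul_nonneg (hx0 t) (hy0 t), A * A', mul_nonneg hA hA', fun t => ?_⟩
  calc x t * y t ≤ (A * n t ^ m) ^ n t * (A' * n t ^ m') ^ n t :=
        mul_le_mul (hxA t) (hyA' t) (hy0 t) (by positivity)
    _ = (A * A' * n t ^ (m + m')) ^ n t := by
        rw [← mul_pow, pow_add, mul_mul_mul_comm]

theorem pow (hx : IsPowBounded n m x) (k : ℕ) : IsPowBounded n (m * k) fun t => x t ^ k := by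
  obtain ⟨hx0, A, hA, hxA⟩ := hx
  refine ⟨fun t => pow_nonneg (hx0 t) k, A ^ k, pow_nonneg hA k, fun t => ?_⟩
  calc x t ^ k ≤ ((A * n t ^ m) ^ n t) ^ k := pow_le_pow_left₀ (hx0 t) (hxA t) k
    _ = (A ^ k * n t ^ (m * k)) ^ n t := by
        rw [pow_mul (n t : ℝ), ← mul_pow, ← pow_mul, ← pow_mul, mul_comm k]

end IsPowBounded

theorem isPowBounded_pow {b : τ → ℝ} {e : τ → ℕ} {A : ℝ} {j k : ℕ} (hb : ∀ t, 1 ≤ b t)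
    (hbA : ∀ t, b t ≤ A * n t ^ j) (he : ∀ t, e t ≤ k * n t) :
    IsPowBounded n (j * k) fun t => b t ^ e t := by
  have hbA' : ∀ t, b t ≤ |A| * n t ^ j := fun t =>
    (hbA t).trans (mul_le_mul_of_nonneg_right (le_abs_self A) (by positivity))
  refine ⟨fun t => pow_nonneg (zero_le_one.trans (hb t)) _, |A| ^ k, by positivity, fun t => ?_⟩
  calc b t ^ e t ≤ b t ^ (k * n t) := pow_le_pow_right₀ (hb t) (he t)
    _ ≤ (|A| * n t ^ j) ^ (k * n t) := pow_le_pow_left₀ (zero_le_one.trans (hb t)) (hbA' t) _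
    _ = (|A| ^ k * n t ^ (j * k)) ^ n t := by rw [pow_mul, mul_pow, ← pow_mul]

theorem isPowBounded_const_pow {c : ℝ} {e : τ → ℕ} {k : ℕ} (hc : 1 ≤ c)
    (he : ∀ t, e t ≤ k * n t) : IsPowBounded n 0 fun t => c ^ e t := by
  simpa using isPowBounded_pow (A := c) (j := 0) (fun _ => hc) (fun _ => by simp) he

theorem isPowBounded_exp {f : τ → ℝ} {A : ℝ} (hf : ∀ t, f t ≤ A * n t) :
    IsPowBounded n 0 fun t => Real.exp (f t) := by
  refine ⟨fun t => (Real.exp_pos _).le, Real.exp A, (Real.exp_pos _).le, fun t => ?_⟩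
  rw [pow_zero, mul_one, ← Real.exp_nat_mul, mul_comm]
  exact Real.exp_le_exp.2 (hf t)

theorem isPowBounded_factorial (n : τ → ℕ) : IsPowBounded n 1 fun t => ((n t).factorial : ℝ) :=
  ⟨fun _ => by positivity, 1, zero_le_one, fun t => by
    simpa using mod_cast Nat.factorial_le_pow (n t)⟩

theorem IsPowBounded.exists_le_of_one_le_mul (hx : IsPowBounded n m x) {Q : ℝ} (hQ : 0 ≤ Q)
    (hn : ∀ t, n t ≠ 0) (hxQ : ∀ t, 1 ≤ x t * (Q / n t) ^ ((m + 1) * n t)) :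
    ∃ E : ℝ, ∀ t, n t ≤ E := by
  obtain ⟨-, A, hA, hxA⟩ := hx
  refine ⟨A * Q ^ (m + 1), fun t => ?_⟩
  have hn0 : (0 : ℝ) < n t := by exact_mod_cast (hn t).bot_lt
  have hone : 1 ≤ (A * Q ^ (m + 1) / n t) ^ n t := calc
    1 ≤ x t * (Q / n t) ^ ((m + 1) * n t) := hxQ t
    _ ≤ (A * n t ^ m) ^ n t * (Q / n t) ^ ((m + 1) * n t) := by
        gcongr
        exact hxA t
    _ = (A * Q ^ (m + 1) / n t) ^ n t := by
        rw [pow_mul, ← mul_pow]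
        congr 1
        rw [div_pow]
        field_simp
        ring
  rw [← one_le_div hn0]
  exact (one_le_pow_iff_of_nonneg (by positivity) (hn t)).1 hone

end PowBounded

section EntireFunctions

theorem exists_differentiable_eq_sub_pow_mul {f : ℂ → ℂ} (hf : Differentiable ℂ f) {t : ℂ} {N : ℕ}
    (hN : (N : ℕ∞) ≤ analyticOrderAt f t) :
    ∃ g : ℂ → ℂ, Differentiable ℂ g ∧ ∀ z, f z = (z - t) ^ N * g z := by
  induction N generalizing f with
  | zero => exact ⟨f, hf, by simp⟩
  | succ N ih =>
    have hft : f t = 0 := by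
      refine apply_eq_zero_of_analyticOrderAt_ne_zero fun h0 => ?_
      simp [h0] at hN
    have hslope : Differentiable ℂ (dslope f t) := by
      rw [← differentiableOn_univ] at hf ⊢
      exact (Complex.differentiableOn_dslope univ_mem).2 hf
    have hfactor : f = (fun z => z - t) * dslope f t := by
      funext z
      simpa [hft] using (sub_smul_dslope f t z).symm
    have hlin : AnalyticAt ℂ (fun z : ℂ => z - t) t := by fun_prop
    have horder : analyticOrderAt f t = 1 + analyticOrderAt (dslope f t) t := by
      conv_lhs => rw [hfactor, analyticOrderAt_mul hlin (hslope.analyticAt t),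
        hlin.analyticOrderAt_eq_one_of_zero_deriv_ne_zero (by simp) (by simp)]
    rw [horder, Nat.cast_add, Nat.cast_one, add_comm, ENat.add_le_add_iff_left (by simp)] at hN
    obtain ⟨g, hg, hgz⟩ := ih hslope hN
    refine ⟨g, hg, fun z => ?_⟩
    rw [congrFun hfactor z, Pi.mul_apply, hgz]
    ring

theorem exists_differentiable_eq_prod_sub_pow_mul {f : ℂ → ℂ} (hf : Differentiable ℂ f)
    {A : Finset ℂ} {N : ℕ} (hN : ∀ t ∈ A, (N : ℕ∞) ≤ analyticOrderAt f t) :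
    ∃ g : ℂ → ℂ, Differentiable ℂ g ∧ ∀ z, f z = (∏ t ∈ A, (z - t) ^ N) * g z := by
  induction A using Finset.induction_on with
  | empty => exact ⟨f, hf, by simp⟩
  | insert a A ha ih =>
    obtain ⟨g, hg, hfg⟩ := ih fun t ht => hN t (mem_insert_of_mem ht)
    have hprod : AnalyticAt ℂ (fun z : ℂ => ∏ t ∈ A, (z - t) ^ N) a :=
      Differentiable.analyticAt (by fun_prop) a
    have hprod_ne : ∏ t ∈ A, (a - t) ^ N ≠ 0 :=
      prod_ne_zero_iff.2 fun t ht => pow_ne_zero _ (sub_ne_zero.2 (by rintro rfl; exact ha ht))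
    have horder : analyticOrderAt f a = analyticOrderAt g a := by
      rw [show f = (fun z => ∏ t ∈ A, (z - t) ^ N) * g from funext hfg,
        analyticOrderAt_mul hprod (hg.analyticAt a), hprod.analyticOrderAt_eq_zero.2 hprod_ne,
        zero_add]
    obtain ⟨k, hk, hgk⟩ :=
      exists_differentiable_eq_sub_pow_mul hg (horder ▸ hN a (mem_insert_self a A))
    refine ⟨k, hk, fun z => ?_⟩
    rw [hfg, hgk, prod_insert ha]
    ring

theorem norm_le_of_norm_prod_sub_pow_mul_le {g : ℂ → ℂ} (hg : Differentiable ℂ g)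
    {A : Finset ℂ} {N : ℕ} {S R M : ℝ} (hA : ∀ t ∈ A, ‖t‖ ≤ S) (hR0 : 0 < R) (hSR : 2 * S ≤ R)
    (hM : ∀ z, ‖z‖ = R → ‖(∏ t ∈ A, (z - t) ^ N) * g z‖ ≤ M) {z : ℂ} (hz : ‖z‖ ≤ R) :
    ‖g z‖ ≤ M * (2 / R) ^ (N * #A) := by
  have hz_mem : z ∈ closure (Metric.ball (0 : ℂ) R) := by
    rw [closure_ball _ hR0.ne']
    simpa using hz
  refine Complex.norm_le_of_forall_mem_frontier_norm_le Metric.isBounded_ball hg.diffContOnCl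
    (fun w hw => ?_) hz_mem
  have hw : ‖w‖ = R := by simpa [frontier_ball _ hR0.ne'] using hw
  have hprod : (R / 2) ^ (N * #A) ≤ ‖∏ t ∈ A, (w - t) ^ N‖ := by
    rw [norm_prod, pow_mul, ← prod_const]
    refine prod_le_prod (fun _ _ => by positivity) fun t ht => ?_
    rw [norm_pow]
    gcongr
    linarith [norm_sub_norm_le w t, hA t ht]
  calc ‖g w‖ = (2 / R) ^ (N * #A) * ((R / 2) ^ (N * #A) * ‖g w‖) := by
        rw [← mul_assoc, ← mul_pow, show 2 / R * (R / 2) = 1 by field_simp, one_pow, one_mul]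
    _ ≤ (2 / R) ^ (N * #A) * ‖(∏ t ∈ A, (w - t) ^ N) * g w‖ := by
        rw [norm_mul]
        gcongr
    _ ≤ (2 / R) ^ (N * #A) * M := by gcongr; exact hM w hw
    _ = M * (2 / R) ^ (N * #A) := mul_comm _ _

theorem norm_iteratedDeriv_zero_le_of_iteratedDeriv_eq_zero {f : ℂ → ℂ} (hf : Differentiable ℂ f)
    {A : Finset ℂ} {N : ℕ} (hzero : ∀ t ∈ A, ∀ m < N, iteratedDeriv m f t = 0) {S R M : ℝ}
    (hS : 0 ≤ S) (hA : ∀ t ∈ A, ‖t‖ ≤ S) (hR1 : 1 ≤ R) (hSR : 2 * S ≤ R)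
    (hM : ∀ z, ‖z‖ ≤ R → ‖f z‖ ≤ M) :
    ‖iteratedDeriv N f 0‖ ≤ N.factorial * (M * (2 * (S + 1) / R) ^ (N * #A)) := by
  have hR0 : 0 < R := by linarith
  have : 0 ≤ M := (norm_nonneg _).trans (hM 0 (by simpa using hR0.le))
  obtain ⟨g, hg, hfg⟩ := exists_differentiable_eq_prod_sub_pow_mul hf fun t ht =>
    (natCast_le_analyticOrderAt_iff_iteratedDeriv_eq_zero (hf.analyticAt t)).2 (hzero t ht)
  have hunit : ∀ z ∈ Metric.sphere (0 : ℂ) 1, ‖f z‖ ≤ M * (2 * (S + 1) / R) ^ (N * #A) := by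
    intro z hz
    have hz : ‖z‖ = 1 := by simpa using hz
    have hprod : ‖∏ t ∈ A, (z - t) ^ N‖ ≤ (S + 1) ^ (N * #A) := by
      rw [norm_prod, pow_mul, ← prod_const]
      refine prod_le_prod (fun _ _ => norm_nonneg _) fun t ht => ?_
      rw [norm_pow]
      gcongr
      linarith [norm_sub_le z t, hA t ht]
    calc ‖f z‖ ≤ (S + 1) ^ (N * #A) * (M * (2 / R) ^ (N * #A)) := by
          rw [hfg, norm_mul]
          gcongr
          exact norm_le_of_norm_prod_sub_pow_mul_le hg hA hR0 hSR
            (fun w hw => hfg w ▸ hM w hw.le) (by linarith)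
      _ = M * (2 * (S + 1) / R) ^ (N * #A) := by
          rw [show 2 * (S + 1) / R = (S + 1) * (2 / R) by ring, mul_pow]
          ring
  simpa using Complex.norm_iteratedDeriv_le_of_forall_mem_sphere_norm_le N one_pos
    hf.diffContOnCl hunit

theorem norm_sum_mul_cexp_le {α : Type*} [Fintype α] {W ω : α → ℂ} {M Y R : ℝ}
    (hW : ∀ a, ‖W a‖ ≤ M) (hω : ∀ a, ‖ω a‖ ≤ Y) {z : ℂ} (hz : ‖z‖ ≤ R) :
    ‖∑ a, W a * Complex.exp (ω a * z)‖ ≤ Fintype.card α * (M * Real.exp (Y * R)) := by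
  have hterm : ∀ a, ‖W a * Complex.exp (ω a * z)‖ ≤ M * Real.exp (Y * R) := by
    intro a
    have hM : 0 ≤ M := (norm_nonneg _).trans (hW a)
    have hY : 0 ≤ Y := (norm_nonneg _).trans (hω a)
    rw [norm_mul, Complex.norm_exp]
    gcongr
    · exact hW a
    · refine (Complex.re_le_norm _).trans ?_
      rw [norm_mul]
      exact mul_le_mul (hω a) hz (norm_nonneg _) hY
  simpa using norm_sum_le_of_le univ fun a _ => hterm a

theorem iteratedDeriv_sum_mul_cexp {α : Type*} [Fintype α] (W ω : α → ℂ) (m : ℕ) (z : ℂ) :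
    iteratedDeriv m (fun z : ℂ => ∑ a, W a * Complex.exp (ω a * z)) z =
      ∑ a, W a * (ω a ^ m * Complex.exp (ω a * z)) := by
  rw [iteratedDeriv_fun_sum fun a _ => by fun_prop]
  refine sum_congr rfl fun a _ => ?_
  rw [iteratedDeriv_const_mul_field, iteratedDeriv_cexp_const_mul]

end EntireFunctions

section LinearForms

variable {α I κ : Type*} [Fintype α] [Fintype I] [Fintype κ]

theorem sum_mul_prod_sum_mul [DecidableEq κ] {R : Type*} [CommSemiring R] (W : α → R)
    (m : κ → I → R) (X : I → α → R) :
    ∑ a, W a * ∏ k, ∑ g, m k g * X g a =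
      ∑ τ : κ → I, (∏ k, m k (τ k)) * ∑ a, W a * ∏ k, X (τ k) a := by
  simp only [Fintype.prod_sum, prod_mul_distrib, mul_sum]
  rw [sum_comm]
  exact sum_congr rfl fun τ _ => sum_congr rfl fun a _ => mul_left_comm _ _ _

theorem norm_sum_mul_prod_sum_mul_le {R : Type*} [NormedCommRing R] [NormOneClass R] (W : α → R)
    {m : κ → I → R} (X : I → α → R) {C D : ℝ} (hC : ∀ k, ∑ g, ‖m k g‖ ≤ C) (hD : 0 ≤ D)
    (hX : ∀ τ : κ → I, ‖∑ a, W a * ∏ k, X (τ k) a‖ ≤ D) :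
    ‖∑ a, W a * ∏ k, ∑ g, m k g * X g a‖ ≤ C ^ Fintype.card κ * D := by
  classical
  calc ‖∑ a, W a * ∏ k, ∑ g, m k g * X g a‖
      ≤ ∑ τ : κ → I, (∏ k, ‖m k (τ k)‖) * D := by
        rw [sum_mul_prod_sum_mul]
        refine norm_sum_le_of_le _ fun τ _ => ?_
        refine (norm_mul_le _ _).trans ?_
        gcongr
        · exact norm_prod_le _ _
        · exact hX τ
    _ = (∏ k, ∑ g, ‖m k g‖) * D := by rw [← sum_mul, Fintype.prod_sum]
    _ ≤ C ^ Fintype.card κ * D := by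
        rw [← card_univ, ← prod_const]
        gcongr with k
        exact hC k

end LinearForms

theorem exists_card_le_card_mul_card_fiber {κ J : Type*} [Fintype κ] [Fintype J] [DecidableEq J]
    [Nonempty J] (t : κ → J) :
    ∃ i, Fintype.card κ ≤ Fintype.card J * Fintype.card {k // t k = i} := by
  have hsum : ∑ i, Fintype.card {k // t k = i} = Fintype.card κ := by
    rw [← Fintype.card_sigma]
    exact Fintype.card_congr (Equiv.sigmaFiberEquiv t)
  obtain ⟨i, -, hi⟩ := exists_le_of_sum_le (f := fun _ : J => Fintype.card κ) univ_nonempty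
    (g := fun i => Fintype.card J * Fintype.card {k // t k = i}) (by simp [← mul_sum, hsum])
  exact ⟨i, hi⟩

theorem eq_zero_of_forall_sum_mul_pow_eq_zero {R α : Type*} [CommRing R] [IsDomain R] [Fintype α]
    {y v : α → R} (hy : Function.Injective y) (h : ∀ n : ℕ, ∑ a, v a * y a ^ n = 0) : v = 0 := by
  let e := Fintype.equivFin α
  have hfin : v ∘ e.symm = 0 :=
    Matrix.eq_zero_of_forall_pow_sum_mul_pow_eq_zero (hy.comp e.symm.injective) fun i =>
      (Equiv.sum_comp e.symm fun a => v a * y a ^ (i : ℕ)).trans (h i)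
  funext a
  simpa using congrFun hfin (e a)

section NumberFields

open NumberField

variable {K : Type*} [Field K] [NumberField K]

theorem house_prod_le_prod_house {κ : Type*} (s : Finset κ) (x : κ → K) :
    house (∏ k ∈ s, x k) ≤ ∏ k ∈ s, house (x k) := by
  simpa only [house, map_prod] using norm_prod_le s fun k => canonicalEmbedding K (x k)

theorem one_le_norm_mul_house_pow {x : 𝓞 K} (hx : x ≠ 0) (φ : K →+* ℂ) :
    1 ≤ ‖φ x‖ * house (x : K) ^ (Module.finrank ℚ K - 1) := by
  have hnorm : 1 ≤ ‖Algebra.norm ℚ (x : K)‖ := by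
    rw [← Algebra.coe_norm_int, ← Rat.norm_cast_real]
    simp only [Rat.cast_intCast, Real.norm_eq_abs]
    exact_mod_cast Int.one_le_abs (Algebra.norm_ne_zero_iff.2 hx)
  exact hnorm.trans (norm_norm_le_norm_mul_house_pow (x : K) φ)

variable (K) in
/- The constant in Mathlib's version of Siegel's lemma is private, so only its existence is used. -/
theorem exists_siegel_const : ∃ c : ℝ, ∀ (α β : Type) [Fintype α] [Fintype β]
    (M : Matrix α β (𝓞 K)), M ≠ 0 → 0 < Fintype.card α → Fintype.card α < Fintype.card β →
      ∀ A : ℝ, (∀ k l, house (M k l : K) ≤ A) →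
        ∃ ξ : β → 𝓞 K, ξ ≠ 0 ∧ M.mulVec ξ = 0 ∧
          ∀ l, house (ξ l : K) ≤ c * (c * (Fintype.card β : ℝ) * A) ^
            ((Fintype.card α : ℝ) / ((Fintype.card β : ℝ) - (Fintype.card α : ℝ))) := by
  classical
  exact ⟨_, fun α β _ _ M hM hα hαβ A hA =>
    house.exists_ne_zero_int_vec_house_le K M hM hα hαβ rfl hA rfl⟩

theorem mul_rpow_le_of_one_le {c x t : ℝ} (hx : 1 ≤ x) (ht0 : 0 ≤ t) (ht1 : t ≤ 1) :
    c * (c * x) ^ t ≤ (|c| + 1) ^ 2 * x := by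
  have hc : 1 ≤ |c| + 1 := by linarith [abs_nonneg c]
  have hcx : |c * x| ≤ (|c| + 1) * x := by
    rw [abs_mul, abs_of_nonneg (zero_le_one.trans hx)]
    gcongr
    linarith
  calc c * (c * x) ^ t ≤ |c| * |(c * x) ^ t| := by
        rw [← abs_mul]
        exact le_abs_self _
    _ ≤ (|c| + 1) * |c * x| ^ t := by
        gcongr
        · linarith
        · exact Real.abs_rpow_le_abs_rpow _ _
    _ ≤ (|c| + 1) * ((|c| + 1) * x) ^ t := by gcongr
    _ ≤ (|c| + 1) * ((|c| + 1) * x) := by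
        gcongr
        exact Real.rpow_le_self_of_one_le (one_le_mul_of_one_le_of_one_le hc hx) ht1
    _ = (|c| + 1) ^ 2 * x := by ring

variable (K) in
theorem exists_siegel_const_of_two_mul_card_le : ∃ C : ℝ, 1 ≤ C ∧
    ∀ (α β : Type) [Fintype α] [Fintype β] (M : Matrix α β (𝓞 K)), M ≠ 0 →
      0 < Fintype.card α → 2 * Fintype.card α ≤ Fintype.card β →
      ∀ A : ℝ, 1 ≤ A → (∀ k l, house (M k l : K) ≤ A) →
        ∃ ξ : β → 𝓞 K, ξ ≠ 0 ∧ M.mulVec ξ = 0 ∧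
          ∀ l, house (ξ l : K) ≤ C * (Fintype.card β * A) := by
  obtain ⟨c, hc⟩ := exists_siegel_const K
  refine ⟨(|c| + 1) ^ 2, one_le_pow₀ (by linarith [abs_nonneg c]), ?_⟩
  intro α β _ _ M hM hα hαβ A hA1 hA
  obtain ⟨ξ, hξ0, hξ, hbound⟩ := hc α β M hM hα (by omega) A hA
  refine ⟨ξ, hξ0, hξ, fun l => (hbound l).trans ?_⟩
  have hα' : (0 : ℝ) < Fintype.card α := by exact_mod_cast hα
  have hαβ' : 2 * (Fintype.card α : ℝ) ≤ Fintype.card β := by exact_mod_cast hαβ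
  have hβ : (1 : ℝ) ≤ Fintype.card β := by exact_mod_cast (by omega : 1 ≤ Fintype.card β)
  rw [mul_assoc c]
  refine mul_rpow_le_of_one_le (one_le_mul_of_one_le_of_one_le hβ hA1)
    (div_nonneg hα'.le (by linarith)) ?_
  rw [div_le_one (by linarith)]
  linarith

theorem exists_ringOfIntegers_eq_intCast_mul {A : Type*} [Finite A] (x : A → K) :
    ∃ δ : ℤ, δ ≠ 0 ∧ ∀ a, ∃ θ : 𝓞 K, (θ : K) = δ * x a := by
  classical
  have := Fintype.ofFinite A
  obtain ⟨δ, hδ, hint⟩ := exists_integral_multiples ℤ ℚ (univ.image x)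
  refine ⟨δ, hδ, fun a => ⟨⟨δ * x a, ?_⟩, rfl⟩⟩
  exact (mem_integralClosure_iff ℤ K).2 (by simpa using hint (x a) (by simp))

/- The rows of the matrix `(ψ g (ω j))` are linearly independent by Artin's theorem on characters,
so it has a left inverse. -/
theorem exists_eq_sum_mul_of_injective_ringHom {I : Type*} [Fintype I] {d : ℕ} {R : Type*}
    [CommRing R] (ω : Module.Basis (Fin d) ℤ R) {ψ : I → R →+* ℂ} (hψ : Function.Injective ψ) :
    ∃ N : I → Fin d → ℂ, ∀ (a : I → ℂ) g, a g = ∑ j, N g j * ∑ h, a h * ψ h (ω j) := by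
  classical
  let v : I → Fin d → ℂ := fun h j => ψ h (ω j)
  have hcombo : ∀ a : I → ℂ, Fintype.linearCombination ℂ v a = fun j => ∑ h, a h * ψ h (ω j) := by
    intro a
    ext j
    simp [v, Fintype.linearCombination_apply]
  have hker : (Fintype.linearCombination ℂ v).ker = ⊥ := by
    rw [LinearMap.ker_eq_bot']
    intro a ha
    have hbasis : ∀ j, ∑ h, a h * ψ h (ω j) = 0 := congrFun ((hcombo a).symm.trans ha)
    have hall : ∀ y : R, ∑ h, a h * ψ h y = 0 := by
      intro y
      let T : R →+ ℂ := ∑ h, (AddMonoidHom.mulLeft (a h)).comp (ψ h : R →+ ℂ)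
      have hT : T.toIntLinearMap = 0 := ω.ext fun j => by simpa [T] using hbasis j
      simpa [T] using LinearMap.congr_fun hT y
    have hindep : LinearIndependent ℂ fun h => ⇑(ψ h : R →* ℂ) :=
      (linearIndependent_monoidHom R ℂ).comp (fun h => (ψ h : R →* ℂ))
        fun g h hgh => hψ (RingHom.ext fun y => DFunLike.congr_fun hgh y)
    funext h
    exact Fintype.linearIndependent_iff.1 hindep a (funext fun y => by simpa using hall y) h
  obtain ⟨φ, hφ⟩ := LinearMap.exists_leftInverse_of_injective _ hker
  refine ⟨fun g j => φ (Pi.single j 1) g, fun a g => ?_⟩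
  have hleft : φ (Fintype.linearCombination ℂ v a) = a := LinearMap.congr_fun hφ a
  conv_lhs => rw [← hleft, hcombo, pi_eq_sum_univ' (fun j => ∑ h, a h * ψ h (ω j))]
  simp [map_sum, mul_comm]

end NumberFields

section SchneiderMethod

open NumberField

/-- The input of Schneider's method: the additive form `y ↦ ∑ g, c g * ι (σ g y)` on the ring of
integers takes logarithms of elements of `K` as values. Only the products of elements of a
`ℤ`-basis `ω` are needed, and `δ` is a common denominator of the corresponding exponentials. -/
structure SchneiderData (K : Type*) [Field K] [NumberField K] (I : Type) [Fintype I]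
    (d : ℕ) where
  ι : K →+* ℂ
  σ : I → 𝓞 K ≃+* 𝓞 K
  σ_injective : Function.Injective σ
  c : I → ℂ
  c_ne_zero : ∀ g, c g ≠ 0
  ω : Module.Basis (Fin d) ℤ (𝓞 K)
  δ : ℤ
  δ_ne_zero : δ ≠ 0
  θ : Fin d → Fin d → 𝓞 K
  ι_θ : ∀ j k, ι (θ j k) = δ * Complex.exp (∑ g, c g * ι (σ g (ω j * ω k)))

namespace SchneiderData

variable {K : Type*} [Field K] [NumberField K] {I : Type} [Fintype I] {d : ℕ}
  (D : SchneiderData K I d)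

/-- The complex embedding of the ring of integers obtained by twisting `ι` with `σ g`. -/
def emb (g : I) : 𝓞 K →+* ℂ :=
  (D.ι.comp (algebraMap (𝓞 K) K)).comp (D.σ g : 𝓞 K →+* 𝓞 K)

/-- The additive form whose values are logarithms of elements of `K`. -/
noncomputable def logForm : 𝓞 K →+ ℂ :=
  ∑ g, (AddMonoidHom.mulLeft (D.c g)).comp (D.emb g : 𝓞 K →+ ℂ)

/-- The algebraic integer with coordinates `a` in the basis `ω`. -/
noncomputable def gridPoint {L : ℕ} (a : Fin d → Fin L) : 𝓞 K := ∑ j, (a j : ℕ) • D.ω j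

/-- The algebraic integer `δ ^ (d * d * (L * S)) * exp (logForm (gridPoint a * gridPoint s))`. -/
def expInt {L S : ℕ} (a : Fin d → Fin L) (s : Fin d → Fin S) : 𝓞 K :=
  ∏ j, ∏ k, D.θ j k ^ (a j * s k : ℕ) * (D.δ : 𝓞 K) ^ (L * S - a j * s k)

theorem emb_injective : Function.Injective D.emb := by
  intro g h hgh
  refine D.σ_injective (RingEquiv.ext fun y => RingOfIntegers.coe_injective (D.ι.injective ?_))
  exact DFunLike.congr_fun hgh y

theorem logForm_apply (y : 𝓞 K) : D.logForm y = ∑ g, D.c g * D.emb g y := by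
  simp [logForm]

theorem logForm_mul_eq_sum (y z : 𝓞 K) :
    D.logForm (y * z) = ∑ g, D.c g * D.emb g z * D.emb g y := by
  rw [logForm_apply]
  exact sum_congr rfl fun g _ => by rw [map_mul, mul_assoc, mul_comm (D.emb g y)]

theorem exists_emb_eq_sum_mul_logForm : ∃ m : I → Fin d → ℂ, ∀ g y,
    D.emb g y = ∑ j, m g j * D.logForm (y * D.ω j) := by
  obtain ⟨N, hN⟩ := exists_eq_sum_mul_of_injective_ringHom D.ω D.emb_injective
  refine ⟨fun g j => (D.c g)⁻¹ * N g j, fun g y => ?_⟩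
  have hcoeff := hN (fun h => D.c h * D.emb h y) g
  calc D.emb g y = (D.c g)⁻¹ * (D.c g * D.emb g y) := (inv_mul_cancel_left₀ (D.c_ne_zero g) _).symm
    _ = ∑ j, (D.c g)⁻¹ * N g j * D.logForm (y * D.ω j) := by
        rw [hcoeff, mul_sum]
        simp only [logForm_apply, map_mul, mul_assoc]

theorem ι_θ_eq_mul_exp_logForm (j k : Fin d) :
    D.ι (D.θ j k) = D.δ * Complex.exp (D.logForm (D.ω j * D.ω k)) := by
  rw [D.ι_θ, logForm_apply]
  rfl

section GridPoint

variable {L S : ℕ}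

theorem gridPoint_injective : Function.Injective (D.gridPoint (L := L)) := by
  intro a b hab
  have hcoord : ∀ a : Fin d → Fin L, D.gridPoint a = D.ω.equivFun.symm fun j => (a j : ℤ) := by
    intro a
    simp [gridPoint, Module.Basis.equivFun_symm_apply]
  rw [hcoord, hcoord] at hab
  funext j
  exact Fin.ext (by exact_mod_cast congrFun (D.ω.equivFun.symm.injective hab) j)

theorem map_gridPoint {E : Type*} [AddCommMonoid E] (φ : 𝓞 K →+ E) (a : Fin d → Fin L) :
    φ (D.gridPoint a) = ∑ j, (a j : ℕ) • φ (D.ω j) := by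
  simp only [gridPoint, map_sum, map_nsmul]

theorem logForm_gridPoint_mul (a : Fin d → Fin L) (y : 𝓞 K) :
    D.logForm (D.gridPoint a * y) = ∑ j, (a j : ℂ) * D.logForm (D.ω j * y) := by
  simpa using D.map_gridPoint (D.logForm.comp (AddMonoidHom.mulRight y)) a

theorem logForm_mul_gridPoint (y : 𝓞 K) (s : Fin d → Fin S) :
    D.logForm (y * D.gridPoint s) = ∑ k, (s k : ℂ) * D.logForm (y * D.ω k) := by
  simpa using D.map_gridPoint (D.logForm.comp (AddMonoidHom.mulLeft y)) s

theorem logForm_mul_gridPoint_update (y : 𝓞 K) (s : Fin d → Fin S) (i : Fin d) (t : Fin S) :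
    D.logForm (y * D.gridPoint (Function.update s i t)) =
      D.logForm (y * D.gridPoint s) + D.logForm (y * D.ω i) * ((t : ℂ) - s i) := by
  rw [logForm_mul_gridPoint, logForm_mul_gridPoint, ← sub_eq_iff_eq_add', ← sum_sub_distrib,
    Fintype.sum_eq_single i fun k hk => by rw [Function.update_of_ne hk, sub_self],
    Function.update_self]
  ring

theorem ι_expInt (a : Fin d → Fin L) (s : Fin d → Fin S) :
    D.ι (D.expInt a s) = (D.δ : ℂ) ^ (d * d * (L * S)) *
      Complex.exp (D.logForm (D.gridPoint a * D.gridPoint s)) := by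
  have hfactor : ∀ j k, D.ι (D.θ j k ^ (a j * s k : ℕ) * (D.δ : 𝓞 K) ^ (L * S - a j * s k) : 𝓞 K) =
      (D.δ : ℂ) ^ (L * S) * Complex.exp (a j * (s k * D.logForm (D.ω j * D.ω k))) := by
    intro j k
    have hle : (a j * s k : ℕ) ≤ L * S := Nat.mul_le_mul (a j).2.le (s k).2.le
    rw [← mul_assoc, ← Nat.cast_mul, Complex.exp_nat_mul, ← pow_sub_mul_pow (D.δ : ℂ) hle]
    simp only [map_mul, map_pow, map_intCast, ι_θ_eq_mul_exp_logForm, mul_pow]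
    ring
  simp only [expInt, map_prod, hfactor]
  simp only [prod_mul_distrib, prod_const, card_univ, Fintype.card_fin, ← pow_mul,
    ← Complex.exp_sum, D.logForm_gridPoint_mul a, logForm_mul_gridPoint, mul_sum]
  ring_nf

theorem expInt_zero [NeZero S] (a : Fin d → Fin L) :
    D.expInt a (0 : Fin d → Fin S) = (D.δ : 𝓞 K) ^ (d * d * (L * S)) := by
  simp only [expInt, Pi.zero_apply, Fin.val_zero, mul_zero, pow_zero, one_mul, Nat.sub_zero,
    prod_const, card_univ, Fintype.card_fin, ← pow_mul]
  ring_nf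

theorem norm_map_gridPoint_le {E : Type*} [SeminormedAddCommGroup E] (φ : 𝓞 K →+ E)
    (a : Fin d → Fin L) : ‖φ (D.gridPoint a)‖ ≤ (∑ j, ‖φ (D.ω j)‖) * L := by
  rw [map_gridPoint, sum_mul]
  refine norm_sum_le_of_le _ fun j _ => norm_nsmul_le.trans ?_
  rw [mul_comm]
  gcongr
  exact (a j).2.le

theorem norm_map_gridPoint_mul_gridPoint_le {E : Type*} [SeminormedAddCommGroup E] (φ : 𝓞 K →+ E)
    (a : Fin d → Fin L) (s : Fin d → Fin S) :
    ‖φ (D.gridPoint a * D.gridPoint s)‖ ≤ (∑ j, ∑ k, ‖φ (D.ω j * D.ω k)‖) * (L * S) := by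
  calc ‖φ (D.gridPoint a * D.gridPoint s)‖
      ≤ (∑ j, ‖φ (D.ω j * D.gridPoint s)‖) * L :=
        D.norm_map_gridPoint_le (φ.comp (AddMonoidHom.mulRight (D.gridPoint s))) a
    _ ≤ (∑ j, (∑ k, ‖φ (D.ω j * D.ω k)‖) * S) * L := by
        gcongr with j
        exact D.norm_map_gridPoint_le (φ.comp (AddMonoidHom.mulLeft (D.ω j))) s
    _ = (∑ j, ∑ k, ‖φ (D.ω j * D.ω k)‖) * (L * S) := by rw [← sum_mul, mul_assoc, mul_comm (S : ℝ)]

theorem house_expInt_le {B : ℝ} (hB : 1 ≤ B) (hδ : |(D.δ : ℝ)| ≤ B)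
    (hθ : ∀ j k, house (D.θ j k : K) ≤ B) (a : Fin d → Fin L) (s : Fin d → Fin S) :
    house (D.expInt a s : K) ≤ B ^ (d * d * (L * S)) := by
  have hfactor : ∀ j k, house ((D.θ j k : K) ^ (a j * s k : ℕ) * (D.δ : K) ^ (L * S - a j * s k)) ≤
      B ^ (L * S) := by
    intro j k
    have hle : (a j * s k : ℕ) ≤ L * S := Nat.mul_le_mul (a j).2.le (s k).2.le
    calc house ((D.θ j k : K) ^ (a j * s k : ℕ) * (D.δ : K) ^ (L * S - a j * s k))
        ≤ house (D.θ j k : K) ^ (a j * s k : ℕ) * house (D.δ : K) ^ (L * S - a j * s k) :=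
          (house_mul_le _ _).trans (mul_le_mul (house_pow_le _ _) (house_pow_le _ _)
            (house_nonneg _) (pow_nonneg (house_nonneg _) _))
      _ ≤ B ^ (a j * s k : ℕ) * B ^ (L * S - a j * s k) := by
          have hδ' : house (D.δ : K) ≤ B := by simpa using hδ
          exact mul_le_mul (pow_le_pow_left₀ (house_nonneg _) (hθ j k) _)
            (pow_le_pow_left₀ (house_nonneg _) hδ' _) (pow_nonneg (house_nonneg _) _)
            (by positivity)
      _ = B ^ (L * S) := by rw [mul_comm, pow_sub_mul_pow _ hle]
  calc house (D.expInt a s : K) ≤ ∏ _j : Fin d, ∏ _k : Fin d, B ^ (L * S) := by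
        simp only [expInt, map_prod, map_mul, map_pow, map_intCast]
        refine (house_prod_le_prod_house _ _).trans
          (prod_le_prod (fun _ _ => house_nonneg _) fun j _ => ?_)
        exact (house_prod_le_prod_house _ _).trans
          (prod_le_prod (fun _ _ => house_nonneg _) fun k _ => hfactor j k)
    _ = B ^ (d * d * (L * S)) := by
        simp only [prod_const, card_univ, Fintype.card_fin, ← pow_mul]
        ring_nf

end GridPoint

/-- A single constant controlling the growth of all the quantities of Schneider's method,
including the coefficients expressing the embeddings through the logarithmic form. -/
structure IsSizeBound (B : ℝ) : Prop where
  one_le : 1 ≤ B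
  abs_δ_le : |(D.δ : ℝ)| ≤ B
  house_σ_le : ∀ g {L : ℕ} (a : Fin d → Fin L), house (D.σ g (D.gridPoint a) : K) ≤ B * L
  norm_logForm_mul_ω_le : ∀ i {L : ℕ} (a : Fin d → Fin L),
    ‖D.logForm (D.gridPoint a * D.ω i)‖ ≤ B * L
  norm_logForm_mul_gridPoint_le : ∀ {L S : ℕ} (a : Fin d → Fin L) (s : Fin d → Fin S),
    ‖D.logForm (D.gridPoint a * D.gridPoint s)‖ ≤ B * (L * S)
  house_expInt_le : ∀ {L S : ℕ} (a : Fin d → Fin L) (s : Fin d → Fin S),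
    house (D.expInt a s : K) ≤ B ^ (d * d * (L * S))
  exists_emb_eq : ∃ m : I → Fin d → ℂ, (∀ g, ∑ j, ‖m g j‖ ≤ B) ∧
    ∀ g y, D.emb g y = ∑ j, m g j * D.logForm (y * D.ω j)

theorem exists_isSizeBound : ∃ B, D.IsSizeBound B := by
  obtain ⟨m, hm⟩ := D.exists_emb_eq_sum_mul_logForm
  let canonicalTwist : I → 𝓞 K →+ ((K →+* ℂ) → ℂ) := fun g =>
    (((canonicalEmbedding K).comp (algebraMap (𝓞 K) K)).comp (D.σ g : 𝓞 K →+* 𝓞 K) :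
      𝓞 K →+* ((K →+* ℂ) → ℂ))
  refine Eventually.exists (f := atTop) ?_
  filter_upwards [eventually_ge_atTop 1, eventually_ge_atTop |(D.δ : ℝ)|,
    eventually_all.2 fun j => eventually_all.2 fun k =>
      eventually_ge_atTop (house (D.θ j k : K)),
    eventually_all.2 fun g => eventually_ge_atTop (∑ j, ‖canonicalTwist g (D.ω j)‖),
    eventually_all.2 fun i => eventually_ge_atTop (∑ j, ‖D.logForm (D.ω j * D.ω i)‖),
    eventually_ge_atTop (∑ j, ∑ k, ‖D.logForm (D.ω j * D.ω k)‖),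
    eventually_all.2 fun g => eventually_ge_atTop (∑ j, ‖m g j‖)]
    with B hone hδ hθ hσ hω hωω hm'
  refine ⟨hone, hδ, fun g L a => ?_, fun i L a => ?_, fun {L S} a s => ?_,
    D.house_expInt_le hone hδ hθ, m, hm', hm⟩
  · exact (D.norm_map_gridPoint_le (canonicalTwist g) a).trans (by gcongr; exact hσ g)
  · exact (D.norm_map_gridPoint_le (D.logForm.comp (AddMonoidHom.mulRight (D.ω i))) a).trans
      (by gcongr; exact hω i)
  · exact (D.norm_map_gridPoint_mul_gridPoint_le D.logForm a s).trans (by gcongr)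

theorem finrank_eq (D : SchneiderData K I d) : Module.finrank ℚ K = d := by
  rw [← RingOfIntegers.rank, Module.finrank_eq_card_basis D.ω, Fintype.card_fin]

section AuxiliaryFunction

variable {L S : ℕ} {κ : Type*} [Fintype κ]

/-- Up to a power of `δ`, the derivative along the embeddings `τ` of the auxiliary exponential
polynomial with coefficients `p`, at the point of coordinates `s`. -/
noncomputable def auxValue (p : (Fin d → Fin L) → 𝓞 K) (τ : κ → I) (s : Fin d → Fin S) : 𝓞 K :=
  ∑ a, p a * ((∏ k, D.σ (τ k) (D.gridPoint a)) * D.expInt a s)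

/-- The term of index `a` in the value at `s` of the auxiliary exponential polynomial. -/
noncomputable def auxTerm (p : (Fin d → Fin L) → 𝓞 K) (s : Fin d → Fin S)
    (a : Fin d → Fin L) : ℂ :=
  D.ι (p a) * Complex.exp (D.logForm (D.gridPoint a * D.gridPoint s))

/-- The auxiliary exponential polynomial with coefficients `p` vanishes to order at least `n` at
all points with coordinates in `Fin S`. -/
def VanishesToOrder (p : (Fin d → Fin L) → 𝓞 K) (S n : ℕ) : Prop :=
  ∀ r < n, ∀ (τ : Fin r → I) (s : Fin d → Fin S), D.auxValue p τ s = 0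

theorem ι_auxValue (p : (Fin d → Fin L) → 𝓞 K) (τ : κ → I) (s : Fin d → Fin S) :
    D.ι (D.auxValue p τ s) = (D.δ : ℂ) ^ (d * d * (L * S)) *
      ∑ a, D.auxTerm p s a * ∏ k, D.emb (τ k) (D.gridPoint a) := by
  simp only [auxValue, auxTerm, map_sum, map_mul, ι_expInt, mul_sum, map_prod]
  exact sum_congr rfl fun a _ => by simp only [emb, RingHom.comp_apply, RingHom.coe_coe]; ring

theorem auxValue_comp_equiv {κ' : Type*} [Fintype κ'] (e : κ' ≃ κ)
    (p : (Fin d → Fin L) → 𝓞 K) (τ : κ → I) (s : Fin d → Fin S) :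
    D.auxValue p (τ ∘ e) s = D.auxValue p τ s := by
  simp only [auxValue, Function.comp_apply]
  exact sum_congr rfl fun a _ => by rw [e.prod_comp fun k => D.σ (τ k) (D.gridPoint a)]

variable {D} {p : (Fin d → Fin L) → 𝓞 K} {n : ℕ}

theorem VanishesToOrder.sum_auxTerm_mul_prod_emb_eq_zero (hp : D.VanishesToOrder p S n)
    (hκ : Fintype.card κ < n) (τ : κ → I) (s : Fin d → Fin S) :
    ∑ a, D.auxTerm p s a * ∏ k, D.emb (τ k) (D.gridPoint a) = 0 := by
  have hzero : D.auxValue p τ s = 0 :=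
    (D.auxValue_comp_equiv (Fintype.equivFin κ).symm p τ s).symm.trans (hp _ hκ _ s)
  have hι := D.ι_auxValue p τ s
  simp only [hzero, map_zero] at hι
  exact (mul_eq_zero.1 hι.symm).resolve_left (pow_ne_zero _ (Int.cast_ne_zero.2 D.δ_ne_zero))

theorem VanishesToOrder.sum_auxTerm_mul_prod_logForm_eq_zero (hp : D.VanishesToOrder p S n)
    (hκ : Fintype.card κ < n) (t : κ → Fin d) (s : Fin d → Fin S) :
    ∑ a, D.auxTerm p s a * ∏ k, D.logForm (D.gridPoint a * D.ω (t k)) = 0 := by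
  classical
  simp only [logForm_mul_eq_sum]
  rw [sum_mul_prod_sum_mul (D.auxTerm p s) (fun k g => D.c g * D.emb g (D.ω (t k)))
    fun g a => D.emb g (D.gridPoint a)]
  exact sum_eq_zero fun τ _ => by rw [hp.sum_auxTerm_mul_prod_emb_eq_zero hκ τ s, mul_zero]

/- Vanishing along all powers of a single embedding, at the origin, is a Vandermonde system. -/
theorem exists_vanishesToOrder_auxValue_ne_zero [Nonempty I] [NeZero S] (hp : p ≠ 0) :
    ∃ n, D.VanishesToOrder p S n ∧ ∃ (τ : Fin n → I) (s : Fin d → Fin S),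
      D.auxValue p τ s ≠ 0 := by
  classical
  have hex : ∃ n, ∃ (τ : Fin n → I) (s : Fin d → Fin S), D.auxValue p τ s ≠ 0 := by
    by_contra! hzero
    obtain ⟨g⟩ := ‹Nonempty I›
    refine hp (eq_zero_of_forall_sum_mul_pow_eq_zero
      ((D.σ g).injective.comp D.gridPoint_injective) fun n => ?_)
    have hn := hzero n (fun _ => g) 0
    simp only [auxValue, expInt_zero, prod_const, card_univ, Fintype.card_fin, ← mul_assoc,
      ← sum_mul] at hn
    exact (mul_eq_zero.1 hn).resolve_right
      (pow_ne_zero _ (by exact_mod_cast D.δ_ne_zero))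
  refine ⟨Nat.find hex, fun r hr τ s => ?_, Nat.find_spec hex⟩
  by_contra hne
  exact Nat.find_min hex hr ⟨τ, s, hne⟩

namespace IsSizeBound

variable {B P : ℝ}

theorem house_prod_σ_le (hB : D.IsSizeBound B) (τ : κ → I) (a : Fin d → Fin L) :
    house ((∏ k, D.σ (τ k) (D.gridPoint a) : 𝓞 K) : K) ≤ (B * L) ^ Fintype.card κ := by
  simp only [map_prod]
  refine (house_prod_le_prod_house _ _).trans ?_
  simpa using prod_le_prod (fun k _ => house_nonneg _)
    fun k (_ : k ∈ univ) => hB.house_σ_le (τ k) a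

theorem house_auxValue_le (hB : D.IsSizeBound B) (hp : ∀ a, house (p a : K) ≤ P) (τ : κ → I)
    (s : Fin d → Fin S) :
    house (D.auxValue p τ s : K) ≤
      L ^ d * (P * ((B * L) ^ Fintype.card κ * B ^ (d * d * (L * S)))) := by
  have hterm : ∀ a, house ((p a : K) *
      (((∏ k, D.σ (τ k) (D.gridPoint a) : 𝓞 K) : K) * (D.expInt a s : K))) ≤
        P * ((B * L) ^ Fintype.card κ * B ^ (d * d * (L * S))) := by
    intro a
    have hB0 : 0 ≤ B := zero_le_one.trans hB.one_le
    refine (house_mul_le _ _).trans (mul_le_mul (hp a) ((house_mul_le _ _).trans ?_)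
      (house_nonneg _) ((house_nonneg _).trans (hp a)))
    exact mul_le_mul (hB.house_prod_σ_le τ a) (hB.house_expInt_le a s) (house_nonneg _)
      (by positivity)
  calc house (D.auxValue p τ s : K)
      ≤ ∑ _a : Fin d → Fin L, P * ((B * L) ^ Fintype.card κ * B ^ (d * d * (L * S))) := by
        simp only [auxValue, map_sum, map_mul]
        exact (house_sum_le_sum_house _ _).trans (sum_le_sum fun a _ => hterm a)
    _ = L ^ d * (P * ((B * L) ^ Fintype.card κ * B ^ (d * d * (L * S)))) := by simp

theorem norm_auxTerm_le (hB : D.IsSizeBound B) (hp : ∀ a, house (p a : K) ≤ P)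
    (s : Fin d → Fin S) (a : Fin d → Fin L) :
    ‖D.auxTerm p s a‖ ≤ P * Real.exp (B * (L * S)) := by
  rw [auxTerm, norm_mul, Complex.norm_exp]
  have : 0 ≤ P := (house_nonneg _).trans (hp a)
  gcongr
  · exact (norm_embedding_le_house _ _).trans (hp a)
  · exact (Complex.re_le_norm _).trans (hB.norm_logForm_mul_gridPoint_le a s)

end IsSizeBound

/-- The auxiliary exponential polynomial on the complex line through the point of coordinates `s`
in the direction of the `i`-th basis vector, differentiated along the basis vectors `t`. -/
noncomputable def auxFun (D : SchneiderData K I d) (p : (Fin d → Fin L) → 𝓞 K) (t : κ → Fin d)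
    (i : Fin d) (s : Fin d → Fin S) (z : ℂ) : ℂ :=
  ∑ a, (D.auxTerm p s a * ∏ k, D.logForm (D.gridPoint a * D.ω (t k))) *
    Complex.exp (D.logForm (D.gridPoint a * D.ω i) * z)

theorem differentiable_auxFun (t : κ → Fin d) (i : Fin d) (s : Fin d → Fin S) :
    Differentiable ℂ (D.auxFun p t i s) := by
  unfold auxFun
  fun_prop

theorem VanishesToOrder.iteratedDeriv_auxFun_eq_zero (hp : D.VanishesToOrder p S n)
    {t : κ → Fin d} {m : ℕ} (hm : m + Fintype.card κ < n) (i : Fin d) (s : Fin d → Fin S)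
    (u : Fin S) : iteratedDeriv m (D.auxFun p t i s) ((u : ℂ) - s i) = 0 := by
  have hzero := hp.sum_auxTerm_mul_prod_logForm_eq_zero (κ := Fin m ⊕ κ) (by simpa using hm)
    (Sum.elim (fun _ => i) t) (Function.update s i u)
  unfold auxFun
  rw [iteratedDeriv_sum_mul_cexp, ← hzero]
  refine sum_congr rfl fun a _ => ?_
  simp only [auxTerm, logForm_mul_gridPoint_update, Complex.exp_add, Fintype.prod_sum_type,
    Sum.elim_inl, Sum.elim_inr, prod_const, card_univ, Fintype.card_fin]
  ring

theorem iteratedDeriv_auxFun_zero (t : κ → Fin d) (i : Fin d) (s : Fin d → Fin S) :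
    iteratedDeriv (Fintype.card {k // t k = i})
      (D.auxFun p (fun k : {k // t k ≠ i} => t k) i s) 0 =
        ∑ a, D.auxTerm p s a * ∏ k, D.logForm (D.gridPoint a * D.ω (t k)) := by
  unfold auxFun
  rw [iteratedDeriv_sum_mul_cexp]
  refine sum_congr rfl fun a _ => ?_
  have hfiber : ∏ k : {k // t k = i}, D.logForm (D.gridPoint a * D.ω (t k)) =
      D.logForm (D.gridPoint a * D.ω i) ^ Fintype.card {k // t k = i} := by
    rw [← card_univ, ← prod_const]
    exact prod_congr rfl fun k _ => by rw [k.2]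
  rw [← Fintype.prod_subtype_mul_prod_subtype (fun k => t k = i), hfiber, mul_zero,
    Complex.exp_zero]
  ring

theorem IsSizeBound.norm_auxFun_le {B P R : ℝ} (hB : D.IsSizeBound B)
    (hP : ∀ a, house (p a : K) ≤ P) (t : κ → Fin d) (i : Fin d) (s : Fin d → Fin S) {z : ℂ}
    (hz : ‖z‖ ≤ R) : ‖D.auxFun p t i s z‖ ≤ L ^ d *
      (P * Real.exp (B * (L * S)) * (B * L) ^ Fintype.card κ * Real.exp (B * L * R)) := by
  have hcoeff : ∀ a, ‖D.auxTerm p s a * ∏ k, D.logForm (D.gridPoint a * D.ω (t k))‖ ≤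
      P * Real.exp (B * (L * S)) * (B * L) ^ Fintype.card κ := by
    intro a
    rw [norm_mul, norm_prod]
    refine mul_le_mul (hB.norm_auxTerm_le hP s a) ?_ (by positivity)
      ((norm_nonneg _).trans (hB.norm_auxTerm_le hP s a))
    simpa using prod_le_prod (fun k _ => norm_nonneg _)
      fun k (_ : k ∈ univ) => hB.norm_logForm_mul_ω_le (t k) a
  simpa [auxFun] using norm_sum_mul_cexp_le hcoeff (fun a => hB.norm_logForm_mul_ω_le i a) hz

theorem IsSizeBound.norm_iteratedDeriv_auxFun_zero_le {B P R : ℝ} (hB : D.IsSizeBound B)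
    (hP : ∀ a, house (p a : K) ≤ P) {N : ℕ} (hp : D.VanishesToOrder p S (N + Fintype.card κ))
    (hR : 2 * (S + 1) ≤ R) (t : κ → Fin d) (i : Fin d) (s : Fin d → Fin S) :
    ‖iteratedDeriv N (D.auxFun p t i s) 0‖ ≤ N.factorial * (L ^ d * (P * Real.exp (B * (L * S)) *
      (B * L) ^ Fintype.card κ * Real.exp (B * L * R)) * (2 * (S + 1) / R) ^ (N * S)) := by
  let A : Finset ℂ := univ.image fun u : Fin S => (u : ℂ) - s i
  have hA : #A = S := by
    rw [card_image_of_injective _ fun u v huv => Fin.ext (by simpa using huv), card_univ,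
      Fintype.card_fin]
  have hzero : ∀ z ∈ A, ∀ m < N, iteratedDeriv m (D.auxFun p t i s) z = 0 := by
    simp only [A, mem_image, mem_univ, true_and, forall_exists_index, forall_apply_eq_imp_iff]
    exact fun u m hm => hp.iteratedDeriv_auxFun_eq_zero (by omega) i s u
  have hAS : ∀ z ∈ A, ‖z‖ ≤ S := by
    simp only [A, mem_image, mem_univ, true_and, forall_exists_index, forall_apply_eq_imp_iff]
    intro u
    have hdist : |((u : ℕ) : ℤ) - (s i : ℕ)| ≤ S := abs_le.2 ⟨by omega, by omega⟩
    calc ‖((u : ℕ) : ℂ) - (s i : ℕ)‖ = ‖((((u : ℕ) : ℤ) - (s i : ℕ) : ℤ) : ℂ)‖ := by push_cast; rfl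
      _ = |((((u : ℕ) : ℤ) - (s i : ℕ) : ℤ) : ℝ)| := Complex.norm_intCast _
      _ ≤ S := by exact_mod_cast hdist
  have hS : (0 : ℝ) ≤ S := S.cast_nonneg
  simpa only [hA] using norm_iteratedDeriv_zero_le_of_iteratedDeriv_eq_zero
    (differentiable_auxFun t i s) hzero hS hAS (by linarith) (by linarith)
    fun z hz => hB.norm_auxFun_le hP t i s hz

theorem IsSizeBound.norm_sum_auxTerm_mul_prod_logForm_le [NeZero d] [NeZero L] {B P R : ℝ}
    (hB : D.IsSizeBound B) (hP : ∀ a, house (p a : K) ≤ P)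
    (hp : D.VanishesToOrder p S (Fintype.card κ)) (hR : 2 * (S + 1) ≤ R) (t : κ → Fin d)
    (s : Fin d → Fin S) :
    ‖∑ a, D.auxTerm p s a * ∏ k, D.logForm (D.gridPoint a * D.ω (t k))‖ ≤
      (Fintype.card κ).factorial * (L ^ d * (P * Real.exp (B * (L * S)) *
        (B * L) ^ Fintype.card κ * Real.exp (B * L * R)) *
          (2 * (S + 1) / R) ^ (Fintype.card κ * (S / d))) := by
  obtain ⟨i, hi⟩ := exists_card_le_card_mul_card_fiber t
  set N := Fintype.card {k // t k = i}
  rw [Fintype.card_fin] at hi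
  have hsplit : N + Fintype.card {k // t k ≠ i} = Fintype.card κ := by
    rw [← Fintype.card_sum]
    exact Fintype.card_congr (Equiv.sumCompl fun k => t k = i)
  have hexp : Fintype.card κ * (S / d) ≤ N * S := calc
    Fintype.card κ * (S / d) ≤ d * N * (S / d) := Nat.mul_le_mul_right _ hi
    _ = N * (d * (S / d)) := by ring
    _ ≤ N * S := Nat.mul_le_mul_left _ (Nat.mul_div_le S d)
  have hBL : 1 ≤ B * L := one_le_mul_of_one_le_of_one_le hB.one_le
    (by exact_mod_cast NeZero.one_le)
  have hR0 : 0 < R := lt_of_lt_of_le (by positivity) hR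
  have hP0 : 0 ≤ P := (house_nonneg _).trans (hP 0)
  have hr : 2 * (S + 1) / R ≤ 1 := (div_le_one hR0).2 hR
  rw [← iteratedDeriv_auxFun_zero t i s]
  refine (hB.norm_iteratedDeriv_auxFun_zero_le hP (hsplit ▸ hp) hR _ i s).trans ?_
  gcongr ?_ * (_ * (_ * ?_ * _) * ?_)
  · exact_mod_cast Nat.factorial_le (by omega)
  · exact pow_le_pow_right₀ hBL (by omega)
  · exact pow_le_pow_of_le_one (by positivity) hr hexp

theorem IsSizeBound.norm_ι_auxValue_le [NeZero d] [NeZero L] {B P R : ℝ}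
    (hB : D.IsSizeBound B) (hP : ∀ a, house (p a : K) ≤ P)
    (hp : D.VanishesToOrder p S (Fintype.card κ)) (hR : 2 * (S + 1) ≤ R) (τ : κ → I)
    (s : Fin d → Fin S) :
    ‖D.ι (D.auxValue p τ s)‖ ≤ B ^ (d * d * (L * S)) * (B ^ Fintype.card κ *
      ((Fintype.card κ).factorial * (L ^ d * (P * Real.exp (B * (L * S)) *
        (B * L) ^ Fintype.card κ * Real.exp (B * L * R)) *
          (2 * (S + 1) / R) ^ (Fintype.card κ * (S / d))))) := by
  obtain ⟨m, hmB, hm⟩ := hB.exists_emb_eq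
  have hB0 : 0 ≤ B := zero_le_one.trans hB.one_le
  have hP0 : 0 ≤ P := (house_nonneg _).trans (hP 0)
  have hR0 : 0 ≤ R := le_trans (by positivity) hR
  rw [ι_auxValue, norm_mul, norm_pow, Complex.norm_intCast]
  gcongr
  · exact hB.abs_δ_le
  · simp only [hm]
    exact norm_sum_mul_prod_sum_mul_le (D.auxTerm p s)
      (fun j a => D.logForm (D.gridPoint a * D.ω j)) (fun k => hmB (τ k)) (by positivity)
      fun t => hB.norm_sum_auxTerm_mul_prod_logForm_le hP hp hR t s

/-- The factor which the Schwarz lemma has to beat in the fundamental inequality of Schneider's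
method. -/
noncomputable def sizeFactor (B P R : ℝ) (d L S n : ℕ) : ℝ :=
  B ^ (d * d * (L * S)) * (B ^ n * (n.factorial * (L ^ d * (P * Real.exp (B * (L * S)) *
    (B * L) ^ n * Real.exp (B * L * R))))) *
      (L ^ d * (P * ((B * L) ^ n * B ^ (d * d * (L * S))))) ^ (d - 1)

theorem IsSizeBound.one_le_sizeFactor_mul [NeZero L] {B P R : ℝ}
    (hB : D.IsSizeBound B) (hP : ∀ a, house (p a : K) ≤ P) (hp : D.VanishesToOrder p S n)
    (hR : 2 * (S + 1) ≤ R) {τ : Fin n → I} {s : Fin d → Fin S} (hne : D.auxValue p τ s ≠ 0) :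
    1 ≤ sizeFactor B P R d L S n * (2 * (S + 1) / R) ^ (n * (S / d)) := by
  have : NeZero d := ⟨D.finrank_eq ▸ Module.finrank_pos.ne'⟩
  have hupper := hB.norm_ι_auxValue_le hP (by simpa using hp) hR τ s
  have hhouse := hB.house_auxValue_le hP τ s
  rw [Fintype.card_fin] at hupper hhouse
  calc 1 ≤ ‖D.ι (D.auxValue p τ s)‖ * house (D.auxValue p τ s : K) ^ (d - 1) := by
        simpa only [D.finrank_eq] using one_le_norm_mul_house_pow hne D.ι
    _ ≤ _ := mul_le_mul hupper (pow_le_pow_left₀ (house_nonneg _) hhouse _)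
        (pow_nonneg (house_nonneg _) _) ((norm_nonneg _).trans hupper)
    _ = sizeFactor B P R d L S n * (2 * (S + 1) / R) ^ (n * (S / d)) := by
        rw [sizeFactor]
        ring

/-- The linear system expressing that the auxiliary exponential polynomial vanishes to order at
least `T` at all points with coordinates in `Fin S`: a row is a monomial in the embeddings,
together with a point. -/
noncomputable def siegelMatrix (D : SchneiderData K I d) (L S T : ℕ) :
    Matrix ((I → Fin T) × (Fin d → Fin S)) (Fin d → Fin L) (𝓞 K) :=
  Matrix.of fun k a => (∏ g, D.σ g (D.gridPoint a) ^ (k.1 g : ℕ)) * D.expInt a k.2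

theorem siegelMatrix_ne_zero (L S T : ℕ) [NeZero L] [NeZero S] [NeZero T] :
    D.siegelMatrix L S T ≠ 0 := by
  intro hM
  have hentry := congrFun (congrFun hM (0, 0)) 0
  simp only [siegelMatrix, Matrix.of_apply, Pi.zero_apply, Fin.val_zero, pow_zero,
    prod_const_one, one_mul, expInt_zero, Matrix.zero_apply] at hentry
  exact pow_ne_zero _ (by exact_mod_cast D.δ_ne_zero) hentry

theorem vanishesToOrder_of_siegelMatrix_mulVec_eq_zero {T : ℕ}
    (hp : (D.siegelMatrix L S T).mulVec p = 0) : D.VanishesToOrder p S T := by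
  classical
  intro r hr τ s
  let e : I → Fin T := fun g =>
    ⟨#{k | τ k = g}, (card_filter_le _ _).trans_lt (by simpa using hr)⟩
  refine Eq.trans (sum_congr rfl fun a _ => ?_) (congrFun hp (e, s))
  rw [← prod_fiberwise' univ τ fun g => D.σ g (D.gridPoint a), mul_comm]
  simp only [siegelMatrix, Matrix.of_apply, prod_const, e]

theorem IsSizeBound.house_siegelMatrix_le [NeZero L] {B : ℝ} (hB : D.IsSizeBound B) {T : ℕ}
    (k : (I → Fin T) × (Fin d → Fin S)) (a : Fin d → Fin L) :
    house (D.siegelMatrix L S T k a : K) ≤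
      (B * L) ^ (T * Fintype.card I) * B ^ (d * d * (L * S)) := by
  have hBL : 1 ≤ B * L := one_le_mul_of_one_le_of_one_le hB.one_le
    (by exact_mod_cast NeZero.one_le)
  have hmonomial : house (∏ g, (D.σ g (D.gridPoint a) : K) ^ (k.1 g : ℕ)) ≤
      (B * L) ^ (T * Fintype.card I) := by
    refine (house_prod_le_prod_house _ _).trans ?_
    rw [pow_mul, ← card_univ, ← prod_const]
    refine prod_le_prod (fun g _ => house_nonneg _) fun g _ => (house_pow_le _ _).trans ?_
    exact (pow_le_pow_left₀ (house_nonneg _) (hB.house_σ_le g a) _).trans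
      (pow_le_pow_right₀ hBL (k.1 g).2.le)
  simp only [siegelMatrix, Matrix.of_apply, map_mul, map_prod, map_pow]
  exact (house_mul_le _ _).trans
    (mul_le_mul hmonomial (hB.house_expInt_le a k.2) (house_nonneg _) (by positivity))

theorem IsSizeBound.exists_vanishesToOrder {B : ℝ} (hB : D.IsSizeBound B) :
    ∃ C : ℝ, 1 ≤ C ∧ ∀ (L S T : ℕ) [NeZero L] [NeZero S] [NeZero T],
      2 * (T ^ Fintype.card I * S ^ d) ≤ L ^ d →
      ∃ p : (Fin d → Fin L) → 𝓞 K, p ≠ 0 ∧ D.VanishesToOrder p S T ∧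
        ∀ a, house (p a : K) ≤
          C * (L ^ d * ((B * L) ^ (T * Fintype.card I) * B ^ (d * d * (L * S)))) := by
  classical
  obtain ⟨C, hC1, hC⟩ := exists_siegel_const_of_two_mul_card_le K
  refine ⟨C, hC1, fun L S T _ _ _ hcard => ?_⟩
  have hBL : 1 ≤ B * L := one_le_mul_of_one_le_of_one_le hB.one_le
    (by exact_mod_cast NeZero.one_le)
  obtain ⟨p, hp0, hp, hhouse⟩ := hC _ _ _ (siegelMatrix_ne_zero (D := D) L S T) Fintype.card_pos
    (by simpa using hcard) _
    (one_le_mul_of_one_le_of_one_le (one_le_pow₀ hBL) (one_le_pow₀ hB.one_le))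
    hB.house_siegelMatrix_le
  exact ⟨p, hp0, vanishesToOrder_of_siegelMatrix_mulVec_eq_zero hp,
    fun a => by simpa using hhouse a⟩

end AuxiliaryFunction

theorem isPowBounded_sizeFactor {τ : Type*} {n L T : τ → ℕ} {R : τ → ℝ} {B C r : ℝ} {l : ℕ}
    (hB : 1 ≤ B) (hC : 1 ≤ C) (hL : ∀ t, 1 ≤ L t) (hLn : ∀ t, L t ≤ l * n t)
    (hTn : ∀ t, T t ≤ n t) (hLR : ∀ t, L t * R t ≤ r * n t) (d S k : ℕ) :
    IsPowBounded n (2 + 2 * d + k + (2 * d + k + 1) * (d - 1)) fun t =>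
      sizeFactor B (C * (L t ^ d * ((B * L t) ^ (T t * k) * B ^ (d * d * (L t * S))))) (R t) d
        (L t) S (n t) := by
  have hB0 : 0 ≤ B := zero_le_one.trans hB
  have hL' : ∀ t, (1 : ℝ) ≤ L t := fun t => by exact_mod_cast hL t
  have hLn' : ∀ t, (L t : ℝ) ≤ l * n t := fun t => by exact_mod_cast hLn t
  have hn : ∀ t, 1 ≤ n t := fun t => Nat.pos_of_mul_pos_left ((hL t).trans (hLn t))
  have hCn : IsPowBounded n 0 fun _ => C := by
    simpa using isPowBounded_const_pow (e := fun _ => 1) (k := 1) hC fun t => by simpa using hn t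
  have hBn : IsPowBounded n 0 fun t => B ^ n t :=
    isPowBounded_const_pow (k := 1) hB fun t => (one_mul _).ge
  have hBLS : IsPowBounded n 0 fun t => B ^ (d * d * (L t * S)) :=
    isPowBounded_const_pow (k := d * d * (l * S)) hB fun t => calc
      d * d * (L t * S) ≤ d * d * (l * n t * S) := by gcongr; exact hLn t
        _ = d * d * (l * S) * n t := by ring
  have hLd : IsPowBounded n d fun t => (L t : ℝ) ^ d := by
    simpa using isPowBounded_pow (j := 1) (k := d) (e := fun _ => d) hL'
      (fun t => by simpa using hLn' t) fun t => Nat.le_mul_of_pos_right _ (hn t)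
  have hBL : ∀ {e : τ → ℕ} {k : ℕ}, (∀ t, e t ≤ k * n t) →
      IsPowBounded n k fun t => (B * L t) ^ e t := fun he => by
    simpa using isPowBounded_pow (j := 1) (A := B * l)
      (fun t => one_le_mul_of_one_le_of_one_le hB (hL' t))
      (fun t => by rw [pow_one, mul_assoc]; gcongr; exact hLn' t) he
  have hBLn := hBL (e := n) (k := 1) fun t => (one_mul _).ge
  have hBLT := hBL (e := fun t => T t * k) (k := k) fun t => by
    rw [mul_comm]; gcongr; exact hTn t
  have hexpS : IsPowBounded n 0 fun t => Real.exp (B * (L t * S)) :=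
    isPowBounded_exp (A := B * (l * S)) fun t => by
      calc B * (L t * S) ≤ B * (l * n t * S) := by gcongr; exact hLn' t
        _ = B * (l * S) * n t := by ring
  have hexpR : IsPowBounded n 0 fun t => Real.exp (B * L t * R t) :=
    isPowBounded_exp (A := B * r) fun t => by
      rw [mul_assoc, mul_assoc]; exact mul_le_mul_of_nonneg_left (hLR t) hB0
  have hP := hCn.mul (hLd.mul (hBLT.mul hBLS))
  have hproduct := (hBLS.mul (hBn.mul ((isPowBounded_factorial n).mul
    (hLd.mul (((hP.mul hexpS).mul hBLn).mul hexpR))))).mul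
      ((hLd.mul (hP.mul (hBLn.mul hBLS))).pow (d - 1))
  convert hproduct using 1 <;> first | rfl | ring

theorem div_div_pow_le_pow_div_pow {Q : ℝ} {n X d : ℕ} (hX : 0 < X) (hQ : 0 ≤ Q)
    (hXn : X ^ (d + 1) ≤ n) (c : ℕ) :
    (Q / (n / X ^ d)) ^ (n * ((d + 1) * c)) ≤ (Q ^ (d + 1) / n) ^ (c * n) := by
  have hn : 0 < n := (pow_pos hX _).trans_le hXn
  have hnR : (n : ℝ) ≤ (n / X ^ d) ^ (d + 1) := by
    rw [div_pow, le_div_iff₀ (by positivity), pow_succ' (n : ℝ), ← pow_mul, mul_comm d, pow_mul]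
    gcongr
    exact_mod_cast hXn
  rw [show n * ((d + 1) * c) = (d + 1) * (c * n) by ring, pow_mul (Q / _), div_pow Q]
  gcongr

-- The degrees `2 * S * X ^ d` and the order `X ^ (d + 1)` are the choice which makes the linear
-- system underdetermined as soon as `card I ≤ d`.
theorem IsSizeBound.exists_one_le_sizeFactor_mul [Nonempty I] {D : SchneiderData K I (d + 1)}
    {B : ℝ} (hB : D.IsSizeBound B) (hI : Fintype.card I ≤ d) {S : ℕ} (hS : S ≠ 0) :
    ∃ C : ℝ, 1 ≤ C ∧ ∀ X : ℕ, 2 * (S + 1) ≤ X → ∃ n : ℕ, X ^ (d + 1) ≤ n ∧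
      1 ≤ sizeFactor B (C * ((2 * S * X ^ d : ℕ) ^ (d + 1) *
          ((B * (2 * S * X ^ d : ℕ)) ^ (X ^ (d + 1) * Fintype.card I) *
            B ^ ((d + 1) * (d + 1) * (2 * S * X ^ d * S)))))
          (n / X ^ d) (d + 1) (2 * S * X ^ d) S n *
        (2 * (S + 1) / (n / X ^ d)) ^ (n * (S / (d + 1))) := by
  obtain ⟨C, hC, hsiegel⟩ := hB.exists_vanishesToOrder
  refine ⟨C, hC, fun X hX => ?_⟩
  have hX0 : 0 < X := by lia
  have : NeZero S := ⟨hS⟩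
  have : NeZero X := ⟨hX0.ne'⟩
  have : NeZero (2 * S * X ^ d) := ⟨by positivity⟩
  have hcount : 2 * ((X ^ (d + 1)) ^ Fintype.card I * S ^ (d + 1)) ≤
      (2 * S * X ^ d) ^ (d + 1) := calc
    2 * ((X ^ (d + 1)) ^ Fintype.card I * S ^ (d + 1))
      ≤ 2 ^ (d + 1) * ((X ^ (d + 1)) ^ d * S ^ (d + 1)) := by
        gcongr
        · exact Nat.le_self_pow d.succ_ne_zero 2
        · exact Nat.one_le_pow _ _ hX0
    _ = (2 * S * X ^ d) ^ (d + 1) := by ring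
  obtain ⟨p, hp0, hvan, hP⟩ := hsiegel (2 * S * X ^ d) S (X ^ (d + 1)) hcount
  obtain ⟨n, hn, τ, s, hne⟩ := D.exists_vanishesToOrder_auxValue_ne_zero (S := S) hp0
  have hXn : X ^ (d + 1) ≤ n := not_lt.1 fun hlt => hne (hvan n hlt τ s)
  refine ⟨n, hXn, hB.one_le_sizeFactor_mul hP hn ?_ hne⟩
  rw [le_div_iff₀ (by positivity)]
  exact_mod_cast (Nat.mul_le_mul_right _ hX).trans ((pow_succ' X d).ge.trans hXn)

-- With `S = O(1)` large, the Schwarz factor beats the size factor unless the exact order of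
-- vanishing `n` is bounded, whereas `n ≥ X ^ d` for arbitrarily large `X`.
theorem le_card_index [Nonempty I] (D : SchneiderData K I d) : d ≤ Fintype.card I := by
  obtain ⟨B, hB⟩ := D.exists_isSizeBound
  by_contra! hI
  obtain ⟨d, rfl⟩ : ∃ e, d = e + 1 := Nat.exists_eq_succ_of_ne_zero (by lia)
  let k := Fintype.card I
  let m := 2 + 2 * (d + 1) + k + (2 * (d + 1) + k + 1) * d
  let S := (d + 1) * ((d + 1) * (m + 1))
  obtain ⟨C, hC, hbound⟩ :=
    hB.exists_one_le_sizeFactor_mul (Nat.lt_succ_iff.1 hI) (S := S) (by positivity)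
  let X : ℕ → ℕ := fun t => t + 2 * (S + 1)
  choose n hXn hn using fun t => hbound (X t) (Nat.le_add_left _ t)
  have hX0 : ∀ t, 0 < X t := fun t => by positivity
  have hXdn : ∀ t, X t ^ d ≤ n t := fun t => (Nat.pow_le_pow_right (hX0 t) d.le_succ).trans (hXn t)
  have hsize := isPowBounded_sizeFactor (n := n) (L := fun t => 2 * S * X t ^ d)
    (T := fun t => X t ^ (d + 1)) (R := fun t => n t / X t ^ d) (r := 2 * S) (l := 2 * S)
    hB.one_le hC (fun t => Nat.one_le_iff_ne_zero.2 (by positivity))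
    (fun t => Nat.mul_le_mul_left _ (hXdn t)) hXn
    (fun t => by have := (hX0 t).ne'; push_cast; field_simp; rfl) (d + 1) S k
  have hn0 : ∀ t, n t ≠ 0 := fun t => ((pow_pos (hX0 t) _).trans_le (hXn t)).ne'
  obtain ⟨E, hE⟩ := hsize.exists_le_of_one_le_mul (Q := (2 * (S + 1)) ^ (d + 1)) (by positivity)
    hn0 fun t => (hn t).trans <| by
      gcongr
      · exact hsize.1 t
      · rw [Nat.mul_div_cancel_left _ d.succ_pos]
        exact div_div_pow_le_pow_div_pow (hX0 t) (by positivity) (hXn t) _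
  obtain ⟨t, ht⟩ := exists_nat_gt E
  have htn : t ≤ n t := calc
    t ≤ X t := Nat.le_add_right _ _
    _ ≤ X t ^ (d + 1) := Nat.le_self_pow d.succ_ne_zero _
    _ ≤ n t := hXn t
  exact absurd (hE t) (not_le.2 (ht.trans_le (by exact_mod_cast htn)))

end SchneiderData

end SchneiderMethod

section LinearFormsInLogarithms

open NumberField

variable {K : Type} [Field K] [NumberField K] (ι : K →+* ℂ)

theorem sum_subtype_ne_zero_mul {A R : Type*} [Fintype A] [Semiring R] (c x : A → R)
    [Fintype {a // c a ≠ 0}] : ∑ a : {a // c a ≠ 0}, c a * x a = ∑ a, c a * x a := by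
  classical
  rw [← sum_subtype (univ.filter fun a => c a ≠ 0) (by simp) fun a => c a * x a]
  exact sum_filter_of_ne fun a _ => left_ne_zero_of_mul

theorem exists_schneiderData {c : (K ≃ₐ[ℚ] K) → ℂ} [Fintype {g // c g ≠ 0}]
    (hexp : ∀ y : 𝓞 K, ∃ α : K, ι α = Complex.exp (∑ g, c g * ι (g y))) :
    Nonempty (SchneiderData K {g // c g ≠ 0} (Module.finrank ℚ K)) := by
  let ω : Module.Basis (Fin (Module.finrank ℚ K)) ℤ (𝓞 K) :=
    Module.finBasisOfFinrankEq ℤ (𝓞 K) (RingOfIntegers.rank K)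
  choose α hα using fun jk : _ × _ => hexp (ω jk.1 * ω jk.2)
  obtain ⟨δ, hδ, hθ⟩ := exists_ringOfIntegers_eq_intCast_mul α
  choose θ hθ using hθ
  refine ⟨{
    ι := ι
    σ := fun g => RingOfIntegers.mapRingEquiv g.1.toRingEquiv
    σ_injective := fun g h hgh => Subtype.ext <| AlgEquiv.ext <| RingHom.congr_fun <|
      IsFractionRing.ringHom_ext (A := 𝓞 K) (f1 := (g.1 : K →+* K)) (f2 := (h.1 : K →+* K))
        fun y => congrArg (algebraMap (𝓞 K) K) (DFunLike.congr_fun hgh y)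
    c := fun g => c g
    c_ne_zero := fun g => g.2
    ω := ω
    δ := δ
    δ_ne_zero := hδ
    θ := fun j k => θ (j, k)
    ι_θ := fun j k => ?_ }⟩
  rw [hθ, map_mul, hα, map_intCast, ← sum_subtype_ne_zero_mul]
  rfl

variable [IsGalois ℚ K]

theorem eq_zero_of_forall_exp_mem_range {c : (K ≃ₐ[ℚ] K) → ℂ}
    (hexp : ∀ y : 𝓞 K, ∃ α : K, ι α = Complex.exp (∑ g, c g * ι (g y)))
    {g₀ : K ≃ₐ[ℚ] K} (hg₀ : c g₀ = 0) : c = 0 := by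
  classical
  by_contra hc
  obtain ⟨g, hg⟩ := Function.ne_iff.1 hc
  have : Nonempty {g // c g ≠ 0} := ⟨g, hg⟩
  obtain ⟨D⟩ := exists_schneiderData ι hexp
  refine absurd D.le_card_index (not_le.2 ?_)
  rw [← IsGalois.card_aut_eq_finrank ℚ K, Nat.card_eq_fintype_card]
  exact Fintype.card_subtype_lt (x := g₀) (not_not.2 hg₀)

theorem exists_intCast_eq_sum_aut (y : 𝓞 K) :
    ∃ t : ℤ, ∑ g : K ≃ₐ[ℚ] K, g (y : K) = t :=
  ⟨Algebra.trace ℤ _ y, by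
    rw [← trace_eq_sum_automorphisms, ← Algebra.coe_trace_int, map_intCast]⟩

theorem sum_map_mul_log_eq_zero {A : Type*} [Fintype A] {β : A → K} {ℓ : A → ℂ}
    (hℓ : ∀ a, ∃ α : K, ι α = Complex.exp (ℓ a)) (hβ : ∑ a, ι (β a) * ℓ a = 0)
    (g : K ≃ₐ[ℚ] K) : ∑ a, ι (g (β a)) * ℓ a = 0 := by
  obtain ⟨δ, hδ, hθ⟩ := exists_ringOfIntegers_eq_intCast_mul β
  choose θ hθ using hθ
  choose α hα using hℓ
  let c : (K ≃ₐ[ℚ] K) → ℂ := fun h => ∑ a, ι (h (θ a)) * ℓ a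
  have hc : ∀ h, c h = δ * ∑ a, ι (h (β a)) * ℓ a := fun h => by
    simp only [c, hθ, map_mul, map_intCast, mul_sum, mul_assoc]
  have hc0 : c = 0 := by
    refine eq_zero_of_forall_exp_mem_range ι (fun y => ?_) (g₀ := 1) (by simp [hc, hβ])
    choose t ht using fun a => exists_intCast_eq_sum_aut (y * θ a)
    have hsum : ∑ h, c h * ι (h y) = ∑ a, (t a : ℂ) * ℓ a := by
      simp only [c, sum_mul]
      rw [sum_comm]
      refine sum_congr rfl fun a _ => ?_
      rw [← map_intCast ι, ← ht, map_sum, sum_mul]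
      exact sum_congr rfl fun h _ => by push_cast; rw [map_mul, map_mul]; ring
    refine ⟨∏ a, α a ^ t a, ?_⟩
    simp only [hsum, Complex.exp_sum, Complex.exp_int_mul, map_prod, map_zpow₀, hα]
  have hδg : δ * ∑ a, ι (g (β a)) * ℓ a = 0 := by rw [← hc, hc0, Pi.zero_apply]
  exact (mul_eq_zero.1 hδg).resolve_left (by exact_mod_cast hδ)

end LinearFormsInLogarithms

section AbelSummation

theorem sum_range_succ_eq_sum_Icc_one {M : Type*} [AddCommMonoid M] {f : ℕ → M} (hf : f 0 = 0)
    (N : ℕ) : ∑ n ∈ range (N + 1), f n = ∑ n ∈ Icc 1 N, f n := by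
  rw [sum_range_eq_add_Ico f N.succ_pos, hf, zero_add, Nat.succ_eq_add_one,
    Ico_add_one_right_eq_Icc]

theorem cauchySeq_sum_pow_div_nat {z : ℂ} (hz : ‖z‖ = 1) (hz1 : z ≠ 1) :
    CauchySeq fun N : ℕ => ∑ n ∈ range N, z ^ n / n := by
  have geometric_bound (N : ℕ) : ‖∑ i ∈ range N, z ^ (i + 1)‖ ≤ 2 / ‖z - 1‖ := by
    simp_rw [pow_succ]
    rw [← sum_mul, geom_sum_eq hz1, norm_mul, norm_div, hz, mul_one]
    gcongr
    calc ‖z ^ N - 1‖ ≤ ‖z ^ N‖ + ‖(1 : ℂ)‖ := norm_sub_le _ _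
      _ = 2 := by rw [norm_pow, hz]; norm_num
  have dirichlet_test : CauchySeq fun N : ℕ =>
      ∑ i ∈ range N, ((1 : ℝ) / (i + 1)) • z ^ (i + 1) :=
    Antitone.cauchySeq_series_mul_of_tendsto_zero_of_bounded
      (fun a b hab => by gcongr) tendsto_one_div_add_atTop_nhds_zero_nat
      geometric_bound
  obtain ⟨l, hl⟩ := cauchySeq_tendsto_of_complete dirichlet_test
  refine ((tendsto_add_atTop_iff_nat 1).1 (hl.congr fun N => ?_)).cauchySeq
  rw [sum_range_succ']
  simp only [pow_zero, Nat.cast_zero, div_zero, add_zero, Complex.real_smul]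
  refine sum_congr rfl fun i _ => ?_
  push_cast
  ring

theorem one_sub_mem_slitPlane {z : ℂ} (hz : ‖z‖ ≤ 1) (hz1 : z ≠ 1) :
    1 - z ∈ Complex.slitPlane := by
  rw [sub_eq_add_neg]
  rcases lt_or_eq_of_le ((Complex.re_le_norm z).trans hz) with hre | hre
  · exact Or.inl (by simpa using hre)
  · refine absurd (Complex.ext hre ?_) hz1
    have : z.re ^ 2 + z.im ^ 2 ≤ 1 := by
      rw [sq, sq, ← Complex.normSq_apply, ← Complex.sq_norm]
      exact pow_le_one₀ (norm_nonneg z) hz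
    exact pow_eq_zero_iff two_ne_zero |>.1 (by nlinarith [sq_nonneg z.im])

theorem tendsto_sum_pow_div_nat {z : ℂ} (hz : ‖z‖ = 1) (hz1 : z ≠ 1) :
    Tendsto (fun N : ℕ => ∑ n ∈ Icc 1 N, z ^ n / n) atTop (𝓝 (-Complex.log (1 - z))) := by
  obtain ⟨l, hl⟩ := cauchySeq_tendsto_of_complete (cauchySeq_sum_pow_div_nat hz hz1)
  have radial_limit : Tendsto (fun r : ℝ => -Complex.log (1 - z * r)) (𝓝[<] 1) (𝓝 l) := by
    have abel := Complex.tendsto_tsum_powerSeries_nhdsWithin_lt hl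
    rw [tendsto_map'_iff] at abel
    refine abel.congr' ?_
    filter_upwards [Ioo_mem_nhdsLT (zero_lt_one' ℝ)] with r hr
    have hzr : ‖z * r‖ < 1 := by
      rw [norm_mul, hz, one_mul, Complex.norm_real, Real.norm_eq_abs, abs_of_pos hr.1]
      exact hr.2
    rw [← (Complex.hasSum_taylorSeries_neg_log hzr).tsum_eq]
    exact tsum_congr fun n => by rw [mul_pow]; ring
  have continuity : Tendsto (fun r : ℝ => -Complex.log (1 - z * r)) (𝓝[<] 1)
      (𝓝 (-Complex.log (1 - z))) := by
    have hc : ContinuousAt (fun r : ℝ => -Complex.log (1 - z * r)) 1 :=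
      (ContinuousAt.clog (by fun_prop)
        (by simpa using one_sub_mem_slitPlane hz.le hz1)).neg
    simpa using hc.tendsto.mono_left nhdsWithin_le_nhds
  rw [tendsto_nhds_unique continuity radial_limit]
  refine ((tendsto_add_atTop_iff_nat 1).2 hl).congr fun N => ?_
  exact sum_range_succ_eq_sum_Icc_one (by simp) N

variable {f : ℕ → ℂ} {l : ℂ}

theorem LSeries_eq_integral_comp_rpow (hl : Tendsto (fun N : ℕ => ∑ n ∈ Icc 1 N, f n) atTop (𝓝 l))
    {x : ℝ} (hx : 0 < x) (hf : LSeriesSummable f x) :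
    LSeries f x = ∫ v in Set.Ioi (1 : ℝ), (v ^ (-2 : ℝ)) • ∑ n ∈ Icc 1 ⌊v ^ x⁻¹⌋₊, f n := by
  have hO : (fun N : ℕ => ∑ n ∈ Icc 1 N, f n) =O[atTop] fun N : ℕ => (N : ℝ) ^ (0 : ℝ) := by
    simpa using hl.isBigO_one ℝ
  have hx' : (x : ℂ) ≠ 0 := by exact_mod_cast hx.ne'
  have hsubst := MeasureTheory.integral_comp_rpow_Ioi_of_pos'
    (g := fun t : ℝ => (∑ n ∈ Icc 1 ⌊t⌋₊, f n) * (t : ℂ) ^ (-(x + 1 : ℂ)))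
    (inv_pos.2 hx) zero_le_one
  rw [LSeries_eq_mul_integral f le_rfl (by simpa using hx) hf hO, ← hsubst, inv_inv,
    Real.one_rpow, ← MeasureTheory.integral_const_mul]
  refine MeasureTheory.setIntegral_congr_fun measurableSet_Ioi fun v hv => ?_
  have hv : 0 < v := zero_lt_one.trans hv
  have hpow : v ^ (x⁻¹ - 1) * (v ^ x⁻¹) ^ (-(x + 1)) = v ^ (-2 : ℝ) := by
    rw [← Real.rpow_mul hv.le, ← Real.rpow_add hv]
    congr 1
    field_simp
    ring
  have hcast : ((v ^ x⁻¹ : ℝ) : ℂ) ^ (-(x + 1 : ℂ)) = ((v ^ x⁻¹) ^ (-(x + 1)) : ℝ) := by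
    rw [← Complex.ofReal_one, ← Complex.ofReal_add, ← Complex.ofReal_neg,
      Complex.ofReal_cpow (x := v ^ x⁻¹) (by positivity)]
  simp only [hcast, Complex.real_smul, ← hpow, Complex.ofReal_mul, Complex.ofReal_inv]
  field_simp

-- After the substitution `t = v ^ x⁻¹` in Abel's summation formula the weight `v⁻²` no longer
-- depends on `x`, so dominated convergence applies.
theorem tendsto_LSeries_nhdsGT_zero (hf : ∀ x : ℝ, 0 < x → LSeriesSummable f x)
    (hl : Tendsto (fun N : ℕ => ∑ n ∈ Icc 1 N, f n) atTop (𝓝 l)) :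
    Tendsto (fun x : ℝ => LSeries f x) (𝓝[>] 0) (𝓝 l) := by
  obtain ⟨M, hM⟩ := hl.norm.bddAbove_range
  have hint : MeasureTheory.IntegrableOn (fun v : ℝ => v ^ (-2 : ℝ)) (Set.Ioi 1) :=
    integrableOn_Ioi_rpow_of_lt (by norm_num) zero_lt_one
  have hlim : l = ∫ v in Set.Ioi (1 : ℝ), (v ^ (-2 : ℝ)) • l := by
    rw [integral_smul_const, integral_Ioi_rpow_of_lt (by norm_num) zero_lt_one]
    norm_num
  rw [hlim]
  refine (MeasureTheory.tendsto_integral_filter_of_dominated_convergence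
    (F := fun (x : ℝ) v => (v ^ (-2 : ℝ)) • ∑ n ∈ Icc 1 ⌊v ^ x⁻¹⌋₊, f n)
    (fun v : ℝ => v ^ (-2 : ℝ) * M) ?_ ?_ (hint.mul_const M) ?_).congr' ?_
  · refine Eventually.of_forall fun x => Measurable.aestronglyMeasurable ?_
    have hsum : Measurable fun N : ℕ => ∑ n ∈ Icc 1 N, f n := .of_discrete
    exact (measurable_id.pow_const _).smul
      (hsum.comp (Nat.measurable_floor.comp (measurable_id.pow_const _)))
  · refine Eventually.of_forall fun x => ?_
    filter_upwards [MeasureTheory.ae_restrict_mem measurableSet_Ioi] with v hv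
    have : 0 < v := zero_lt_one.trans hv
    rw [norm_smul, Real.norm_of_nonneg (by positivity)]
    exact mul_le_mul_of_nonneg_left (hM ⟨_, rfl⟩) (by positivity)
  · filter_upwards [MeasureTheory.ae_restrict_mem measurableSet_Ioi] with v hv
    refine (hl.comp (tendsto_nat_floor_atTop.comp ?_)).const_smul _
    exact (tendsto_rpow_atTop_of_base_gt_one v hv).comp tendsto_inv_nhdsGT_zero
  · filter_upwards [self_mem_nhdsWithin] with x hx
    exact (LSeries_eq_integral_comp_rpow hl hx (hf x hx)).symm

theorem LSeries_term_div_nat (F : ℕ → ℂ) (s : ℂ) (n : ℕ) :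
    LSeries.term (fun n => F n / n) s n = LSeries.term F (s + 1) n := by
  rcases eq_or_ne n 0 with rfl | hn
  · simp
  · rw [LSeries.term_of_ne_zero hn, LSeries.term_of_ne_zero hn,
      Complex.cpow_add _ _ (Nat.cast_ne_zero.2 hn), Complex.cpow_one, div_div, mul_comm]

theorem tendsto_LSeries_nhdsGT_one {F : ℕ → ℂ} (hF : ∀ s : ℝ, 1 < s → LSeriesSummable F s)
    (hl : Tendsto (fun N : ℕ => ∑ n ∈ Icc 1 N, F n / n) atTop (𝓝 l)) :
    Tendsto (fun s : ℝ => LSeries F s) (𝓝[>] 1) (𝓝 l) := by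
  have hterm (x : ℝ) : LSeries.term (fun n => F n / n) x = LSeries.term F ((x + 1 : ℝ) : ℂ) := by
    push_cast
    exact funext (LSeries_term_div_nat F x)
  have hshift : Tendsto (fun s : ℝ => s - 1) (𝓝[>] 1) (𝓝[>] 0) := by
    have hc : Tendsto (fun s : ℝ => s - 1) (𝓝[>] 1) (𝓝 (1 - 1)) :=
      (tendsto_id.sub_const 1).mono_left nhdsWithin_le_nhds
    rw [sub_self] at hc
    exact tendsto_nhdsWithin_iff.2 ⟨hc, eventually_mem_nhdsWithin.mono fun s hs =>
      Set.mem_Ioi.2 (sub_pos.2 hs)⟩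
  refine ((tendsto_LSeries_nhdsGT_zero (fun x hx => ?_) hl).comp hshift).congr fun s => ?_
  · rw [LSeriesSummable, hterm]
    exact hF _ (by linarith)
  · simp [LSeries, hterm]

end AbelSummation

section LFunctionAtOne

variable {q : ℕ} [NeZero q]

theorem stdAddChar_pow (k : ZMod q) (n : ℕ) :
    (ZMod.stdAddChar k : ℂ) ^ n = ZMod.stdAddChar (k * (n : ZMod q)) := by
  rw [← AddChar.map_nsmul_eq_pow, nsmul_eq_mul, mul_comm]

theorem stdAddChar_ne_one {k : ZMod q} (hk : k ≠ 0) : (ZMod.stdAddChar k : ℂ) ≠ 1 :=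
  fun h => hk (ZMod.injective_stdAddChar (h.trans (AddChar.map_zero_eq_one _).symm))

theorem eq_inv_mul_sum_dft_mul_stdAddChar_pow (Φ : ZMod q → ℂ) (n : ℕ) :
    Φ n = (q : ℂ)⁻¹ * ∑ k, ZMod.dft Φ k * (ZMod.stdAddChar k : ℂ) ^ n := by
  have hinv := ZMod.invDFT_apply (ZMod.dft Φ) (n : ZMod q)
  rw [LinearEquiv.symm_apply_apply] at hinv
  rw [hinv, smul_eq_mul]
  congr 1
  exact sum_congr rfl fun k _ => by rw [stdAddChar_pow, smul_eq_mul, mul_comm]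

theorem tendsto_sum_div_nat_dft {Φ : ZMod q → ℂ} (hΦ : ∑ j, Φ j = 0) :
    Tendsto (fun N : ℕ => ∑ n ∈ Icc 1 N, Φ n / n) atTop
      (𝓝 ((q : ℂ)⁻¹ * ∑ k, ZMod.dft Φ k * -Complex.log (1 - ZMod.stdAddChar k))) := by
  have hexpand (N : ℕ) : ∑ n ∈ Icc 1 N, Φ n / n =
      (q : ℂ)⁻¹ * ∑ k, ZMod.dft Φ k * ∑ n ∈ Icc 1 N, (ZMod.stdAddChar k : ℂ) ^ n / n := by
    simp_rw [mul_sum]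
    rw [sum_comm]
    refine sum_congr rfl fun n _ => ?_
    rw [eq_inv_mul_sum_dft_mul_stdAddChar_pow Φ n, mul_sum, sum_div]
    exact sum_congr rfl fun k _ => by ring
  simp_rw [hexpand]
  refine Tendsto.const_mul _ (tendsto_finsetSum _ fun k _ => ?_)
  rcases eq_or_ne k 0 with rfl | hk
  · simp [ZMod.dft_apply_zero, hΦ]
  · exact (tendsto_sum_pow_div_nat (AddChar.norm_apply _ _) (stdAddChar_ne_one hk)).const_mul _

theorem tendsto_ofReal_nhdsGT_one : Tendsto (fun s : ℝ => (s : ℂ)) (𝓝[>] 1) (𝓝[≠] 1) := by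
  have hc : Tendsto (fun s : ℝ => (s : ℂ)) (𝓝[>] 1) (𝓝 (1 : ℝ)) :=
    (Complex.continuous_ofReal.tendsto 1).mono_left nhdsWithin_le_nhds
  refine tendsto_nhdsWithin_iff.2 ⟨by simpa using hc, eventually_mem_nhdsWithin.mono fun s hs => ?_⟩
  exact Complex.ofReal_ne_one.2 (ne_of_gt hs)

theorem tendsto_LFunction_nhdsGT_one {Φ : ZMod q → ℂ} (hΦ : ∑ j, Φ j = 0) :
    Tendsto (fun s : ℝ => ZMod.LFunction Φ s) (𝓝[>] 1) (𝓝 (ZMod.LFunction Φ 1)) :=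
  ((ZMod.differentiable_LFunction_of_sum_zero hΦ).continuous.tendsto 1).comp
    (tendsto_ofReal_nhdsGT_one.mono_right nhdsWithin_le_nhds)

theorem LFunction_one_eq_of_tendsto {Φ : ZMod q → ℂ} (hΦ : ∑ j, Φ j = 0) {l : ℂ}
    (hl : Tendsto (fun N : ℕ => ∑ n ∈ Icc 1 N, Φ n / n) atTop (𝓝 l)) :
    ZMod.LFunction Φ 1 = l := by
  have habel := tendsto_LSeries_nhdsGT_one (F := fun n : ℕ => Φ n)
    (fun s hs => ZMod.LSeriesSummable_of_one_lt_re Φ (by simpa using hs)) hl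
  refine tendsto_nhds_unique (tendsto_LFunction_nhdsGT_one hΦ) (habel.congr' ?_)
  filter_upwards [self_mem_nhdsWithin] with s hs
  exact (ZMod.LFunction_eq_LSeries Φ (by simpa using hs)).symm

theorem LFunction_one_eq_sum_log {Φ : ZMod q → ℂ} (hΦ : ∑ j, Φ j = 0) :
    ZMod.LFunction Φ 1 =
      -(q : ℂ)⁻¹ * ∑ k, ZMod.dft Φ k * Complex.log (1 - ZMod.stdAddChar k) := by
  rw [LFunction_one_eq_of_tendsto hΦ (tendsto_sum_div_nat_dft hΦ)]
  simp

theorem LFunction_one_eq_zero_iff_sum_log {Φ : ZMod q → ℂ} (hΦ : ∑ j, Φ j = 0) :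
    ZMod.LFunction Φ 1 = 0 ↔
      ∑ k, ZMod.dft Φ k * Complex.log (1 - ZMod.stdAddChar k) = 0 := by
  rw [LFunction_one_eq_sum_log hΦ, mul_eq_zero_iff_left]
  exact neg_ne_zero.2 (inv_ne_zero (NeZero.ne _))

theorem sum_comp_unit_mul {M : Type*} [AddCommMonoid M] (F : ZMod q → M) (u : (ZMod q)ˣ) :
    ∑ j, F (u * j) = ∑ j, F j :=
  Equiv.sum_comp (Units.mulLeft u) F

section Galois

open IsCyclotomicExtension

variable {K : Type} [Field K] [NumberField K] [IsCyclotomicExtension {q} ℚ K] (ι : K →+* ℂ)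

theorem exists_map_eq_stdAddChar (k : ZMod q) : ∃ w : K, ι w = ZMod.stdAddChar k := by
  have hroot : (ZMod.stdAddChar k : ℂ) ^ q = 1 := by simp [stdAddChar_pow]
  obtain ⟨i, -, hi⟩ :=
    ((zeta_spec q ℚ K).map_of_injective ι.injective).eq_pow_of_pow_eq_one hroot
  exact ⟨zeta q ℚ K ^ i, by rw [map_pow, hi]⟩

theorem map_galois_eq_stdAddChar_mul {k : ZMod q} {w : K} (hw : ι w = ZMod.stdAddChar k)
    (g : K ≃ₐ[ℚ] K) : ι (g w) = ZMod.stdAddChar (k * (Rat.galEquivZMod q K g : ZMod q)) := by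
  have hroot : w ^ q = 1 := ι.injective (by simp [hw, stdAddChar_pow])
  rw [Rat.galEquivZMod_apply_of_pow_eq q K g hroot, map_pow, hw, stdAddChar_pow,
    ZMod.natCast_zmod_val]

theorem exists_map_eq_dft (F : ZMod q → ℚ) {g : K ≃ₐ[ℚ] K} {u : (ZMod q)ˣ}
    (hg : Rat.galEquivZMod q K g = u⁻¹) (k : ZMod q) :
    ∃ β : K, ι β = ZMod.dft (fun j => (F j : ℂ)) k ∧
      ι (g β) = ZMod.dft (fun j : ZMod q => (F (u * j) : ℂ)) k := by
  choose w hw using exists_map_eq_stdAddChar (q := q) ι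
  refine ⟨∑ j, w (-(j * k)) * algebraMap ℚ K (F j), ?_, ?_⟩
  · simp [ZMod.dft_apply, hw]
  · rw [ZMod.dft_comp_unitMul (fun j => (F j : ℂ)) u k, ZMod.dft_apply, map_sum, map_sum]
    refine sum_congr rfl fun j _ => ?_
    rw [map_mul, map_mul, map_galois_eq_stdAddChar_mul ι (hw _), hg, AlgEquiv.commutes]
    simp only [eq_ratCast, map_ratCast, smul_eq_mul, neg_mul, mul_assoc]
    ring_nf

theorem exists_map_eq_exp_log_one_sub (k : ZMod q) :
    ∃ α : K, ι α = Complex.exp (Complex.log (1 - ZMod.stdAddChar k)) := by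
  rcases eq_or_ne k 0 with rfl | hk
  · exact ⟨1, by simp⟩
  · obtain ⟨w, hw⟩ := exists_map_eq_stdAddChar ι k
    refine ⟨1 - w, ?_⟩
    rw [map_sub, map_one, hw, Complex.exp_log (sub_ne_zero.2 (stdAddChar_ne_one hk).symm)]

theorem LFunction_one_comp_unit_mul_eq_zero {F : ZMod q → ℚ} (hF : ∑ j, F j = 0)
    (hL : ZMod.LFunction (fun j => (F j : ℂ)) 1 = 0) (u : (ZMod q)ˣ) :
    ZMod.LFunction (fun j : ZMod q => (F (u * j) : ℂ)) 1 = 0 := by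
  have : IsCyclotomicExtension {q} ℚ (CyclotomicField q ℚ) := by
    have : NeZero (q : ℚ) := ⟨NeZero.ne _⟩
    convert CyclotomicField.isCyclotomicExtension q ℚ
    · rfl
    · exact Subsingleton.elim _ _
  have : IsGalois ℚ (CyclotomicField q ℚ) := isGalois {q} ℚ _
  let ι : CyclotomicField q ℚ →+* ℂ := Classical.arbitrary _
  obtain ⟨g, hg⟩ := (Rat.galEquivZMod q (CyclotomicField q ℚ)).surjective u⁻¹
  choose β hβ hgβ using exists_map_eq_dft ι F hg
  have hF' : ∑ j, (F j : ℂ) = 0 := by exact_mod_cast hF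
  rw [LFunction_one_eq_zero_iff_sum_log hF'] at hL
  rw [LFunction_one_eq_zero_iff_sum_log
    ((sum_comp_unit_mul (fun j => (F j : ℂ)) u).trans hF')]
  simp only [← hgβ]
  simp only [← hβ] at hL
  exact sum_map_mul_log_eq_zero ι (exists_map_eq_exp_log_one_sub ι) hL g

end Galois

end LFunctionAtOne

section FactoredSum

/-- The set `M(q)` of positive integers all of whose prime factors divide `q`. -/
abbrev factoredBy (q : ℕ) : Set ℕ := Nat.factoredNumbers q.primeFactors

theorem exists_mul_eq_factoredBy_coprime {q n : ℕ} (hq : q ≠ 0) (hn : n ≠ 0) :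
    ∃ a b, a * b = n ∧ a ∈ factoredBy q ∧ b.Coprime q := by
  induction n using induction_on_primes with
  | zero => exact absurd rfl hn
  | one => exact ⟨1, 1, one_mul 1, by simp [Nat.mem_factoredNumbers], Nat.coprime_one_left q⟩
  | prime_mul p n hp ih =>
    obtain ⟨a, b, rfl, ha, hb⟩ := ih (right_ne_zero_of_mul hn)
    by_cases hpq : p ∣ q
    · refine ⟨p * a, b, mul_assoc p a b, Nat.mul_mem_factoredNumbers ?_ ha, hb⟩
      rw [Nat.mem_factoredNumbers']
      intro r hr hrp
      rw [(Nat.prime_dvd_prime_iff_eq hr hp).1 hrp]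
      exact Nat.mem_primeFactors.2 ⟨hp, hpq, hq⟩
    · exact ⟨a, p * b, mul_left_comm a p b, ha,
        ((Nat.Prime.coprime_iff_not_dvd hp).2 hpq).mul_left hb⟩

theorem coprime_of_mem_factoredBy {q a b : ℕ} (ha : a ∈ factoredBy q) (hb : b.Coprime q) :
    a.Coprime b :=
  Nat.coprime_of_dvd fun p hp hpa hpb => hp.ne_one <| Nat.eq_one_of_dvd_coprimes hb hpb
    (Nat.dvd_of_mem_primeFactors (Nat.mem_factoredNumbers'.1 ha p hp hpa))

theorem eq_of_mul_eq_mul_factoredBy {q a b c d : ℕ} (ha : a ∈ factoredBy q) (hb : b.Coprime q)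
    (hc : c ∈ factoredBy q) (hd : d.Coprime q) (h : a * b = c * d) : a = c ∧ b = d := by
  have hac : a = c := Nat.dvd_antisymm
    ((coprime_of_mem_factoredBy ha hd).dvd_of_dvd_mul_right ⟨b, h.symm⟩)
    ((coprime_of_mem_factoredBy hc hb).dvd_of_dvd_mul_right ⟨d, h⟩)
  subst hac
  exact ⟨rfl, Nat.eq_of_mul_eq_mul_left
    (Nat.pos_of_ne_zero (Nat.ne_zero_of_mem_factoredNumbers ha)) h⟩

theorem summable_factoredNumbers_inv (s : Finset ℕ) :
    Summable fun m : Nat.factoredNumbers s => ((m : ℕ) : ℝ)⁻¹ := by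
  let inv : ℕ →* ℝ := invMonoidWithZeroHom.toMonoidHom.comp (Nat.castRingHom ℝ).toMonoidHom
  have hinv (n : ℕ) : inv n = (n : ℝ)⁻¹ := rfl
  refine (EulerProduct.summable_and_hasSum_factoredNumbers_prod_filter_prime_geometric
    (f := inv) (fun {p} hp => ?_) s).1.congr fun m => by simp [hinv]
  rw [hinv, norm_inv, Real.norm_natCast]
  exact inv_lt_one_of_one_lt₀ (by exact_mod_cast hp.one_lt)

variable {q : ℕ} [NeZero q]

theorem summable_factoredBy_div (Φ : ZMod q → ℂ) :
    Summable fun m : factoredBy q => Φ (m : ℕ) / (m : ℕ) := by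
  refine .of_norm_bounded ((summable_factoredNumbers_inv q.primeFactors).mul_left ‖Φ‖) fun m => ?_
  rw [norm_div, Complex.norm_natCast, div_eq_mul_inv]
  gcongr
  exact norm_le_pi_norm Φ _

/-- The functional `Φ ↦ ∑_{m ∈ M(q)} Φ(m) / m` of condition (i). -/
noncomputable def factoredSum (q : ℕ) [NeZero q] : (ZMod q → ℂ) →ₗ[ℂ] ℂ where
  toFun Φ := ∑' m : factoredBy q, Φ (m : ℕ) / (m : ℕ)
  map_add' Φ Ψ := by
    simp only [Pi.add_apply, add_div]
    exact (summable_factoredBy_div Φ).tsum_add (summable_factoredBy_div Ψ)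
  map_smul' c Φ := by simp [mul_div_assoc, tsum_mul_left]

theorem factoredSum_apply (Φ : ZMod q → ℂ) :
    factoredSum q Φ = ∑' m : factoredBy q, Φ (m : ℕ) / (m : ℕ) := rfl

/-- The restriction of the `q`-periodic sequence `Φ` to `M(q)`, extended by zero. -/
noncomputable def factoredPart (Φ : ZMod q → ℂ) : ℕ → ℂ :=
  (factoredBy q).indicator fun n => Φ n

theorem LSeriesSummable_factoredPart (Φ : ZMod q → ℂ) {s : ℂ} (hs : 1 < s.re) :
    LSeriesSummable (factoredPart Φ) s :=
  LSeriesSummable_of_bounded_of_one_lt_re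
    (fun n _ => (norm_indicator_le_norm_self _ n).trans (norm_le_pi_norm Φ n)) hs

theorem tendsto_LSeries_factoredPart (Φ : ZMod q → ℂ) :
    Tendsto (fun s : ℝ => LSeries (factoredPart Φ) s) (𝓝[>] 1) (𝓝 (factoredSum q Φ)) := by
  refine tendsto_LSeries_nhdsGT_one
    (fun s hs => LSeriesSummable_factoredPart Φ (by simpa using hs)) ?_
  have hsum := (hasSum_subtype_iff_indicator (f := fun n : ℕ => Φ n / n) (s := factoredBy q)).1
    (summable_factoredBy_div Φ).hasSum
  refine (hsum.tendsto_sum_nat.comp (tendsto_add_atTop_nat 1)).congr fun N => ?_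
  rw [Function.comp_apply, sum_range_succ_eq_sum_Icc_one (by simp)]
  simp only [factoredPart, Set.indicator_apply, ite_div, zero_div]

end FactoredSum

section CharacterDecomposition

variable {q : ℕ} [NeZero q] {Φ : ZMod q → ℂ} {χ : DirichletCharacter ℂ q}

theorem convolution_factoredPart_char (hΦ : ∀ (u : (ZMod q)ˣ) j, Φ (u * j) = χ u * Φ j)
    {n : ℕ} (hn : n ≠ 0) :
    LSeries.convolution (factoredPart Φ) (fun n : ℕ => χ n) n = Φ n := by
  obtain ⟨a, b, rfl, ha, hb⟩ := exists_mul_eq_factoredBy_coprime (NeZero.ne q) hn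
  rw [LSeries.convolution_def]
  dsimp only
  rw [sum_eq_single_of_mem (a, b) (Nat.mem_divisorsAntidiagonal.2 ⟨rfl, hn⟩)]
  · have hab := hΦ (ZMod.unitOfCoprime b hb) a
    rw [ZMod.coe_unitOfCoprime] at hab
    rw [factoredPart, Set.indicator_of_mem ha, Nat.cast_mul, mul_comm (a : ZMod q), hab, mul_comm]
  · rintro ⟨c, d⟩ hcd hne
    by_cases hc : c ∈ factoredBy q
    · have hd : ¬ d.Coprime q := fun hd => hne <| Prod.ext_iff.2 <|
        eq_of_mul_eq_mul_factoredBy hc hd ha hb (Nat.mem_divisorsAntidiagonal.1 hcd).1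
      rw [χ.map_nonunit (by rwa [ZMod.isUnit_iff_coprime]), mul_zero]
    · rw [factoredPart, Set.indicator_of_notMem hc, zero_mul]

theorem LFunction_eq_LSeries_factoredPart_mul
    (hΦ : ∀ (u : (ZMod q)ˣ) j, Φ (u * j) = χ u * Φ j) {s : ℂ} (hs : 1 < s.re) :
    ZMod.LFunction Φ s = LSeries (factoredPart Φ) s * χ.LFunction s := by
  rw [ZMod.LFunction_eq_LSeries Φ hs, χ.LFunction_eq_LSeries hs,
    ← LSeries_convolution' (LSeriesSummable_factoredPart Φ hs)
      (ZMod.LSeriesSummable_of_one_lt_re _ hs)]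
  exact LSeries_congr (fun hn => (convolution_factoredPart_char hΦ hn).symm) s

theorem LFunction_one_eq_factoredSum_mul (hΦ : ∀ (u : (ZMod q)ˣ) j, Φ (u * j) = χ u * Φ j)
    (hχ : χ ≠ 1) (h0 : ∑ j, Φ j = 0) :
    ZMod.LFunction Φ 1 = factoredSum q Φ * χ.LFunction 1 := by
  have hχ_lim : Tendsto (fun s : ℝ => χ.LFunction s) (𝓝[>] 1) (𝓝 (χ.LFunction 1)) :=
    ((DirichletCharacter.differentiable_LFunction hχ).continuous.tendsto 1).comp
      (tendsto_ofReal_nhdsGT_one.mono_right nhdsWithin_le_nhds)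
  refine tendsto_nhds_unique (tendsto_LFunction_nhdsGT_one h0)
    (((tendsto_LSeries_factoredPart Φ).mul hχ_lim).congr' ?_)
  filter_upwards [self_mem_nhdsWithin] with s hs
  exact (LFunction_eq_LSeries_factoredPart_mul hΦ (by simpa using hs)).symm

-- The factor `ζ(s)` has a pole at `1`, whereas the product stays bounded there.
theorem factoredSum_eq_zero_of_unit_invariant (hΦ : ∀ (u : (ZMod q)ˣ) j, Φ (u * j) = Φ j)
    (h0 : ∑ j, Φ j = 0) : factoredSum q Φ = 0 := by
  have hres : Tendsto (fun s : ℝ => ((s : ℂ) - 1) * ZMod.LFunction Φ s) (𝓝[>] 1) (𝓝 0) := by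
    have hcomp := (ZMod.LFunction_residue_one Φ).comp tendsto_ofReal_nhdsGT_one
    rwa [← sum_div, h0, zero_div] at hcomp
  have hfac := (tendsto_LSeries_factoredPart Φ).mul
    ((DirichletCharacter.LFunctionTrivChar_residue_one (N := q)).comp tendsto_ofReal_nhdsGT_one)
  have hprod : factoredSum q Φ * ∏ p ∈ q.primeFactors, (1 - (p : ℂ)⁻¹) = 0 := by
    refine tendsto_nhds_unique (hfac.congr' ?_) hres
    filter_upwards [self_mem_nhdsWithin] with s hs
    rw [LFunction_eq_LSeries_factoredPart_mul (χ := 1) (fun u j => by simp [hΦ u j])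
      (by simpa using hs)]
    simp only [Function.comp_apply, DirichletCharacter.LFunctionTrivChar]
    ring
  refine (mul_eq_zero.1 hprod).resolve_right (prod_ne_zero_iff.2 fun p hp => ?_)
  rw [sub_ne_zero, ne_comm, inv_ne_one]
  exact_mod_cast (Nat.prime_of_mem_primeFactors hp).ne_one

/-- The `χ⁻¹`-isotypic projection of `F` under dilation by units of `ZMod q`, up to the factor
`φ(q)`. -/
noncomputable def charTwist (χ : DirichletCharacter ℂ q) (F : ZMod q → ℂ) : ZMod q → ℂ :=
  ∑ h : (ZMod q)ˣ, χ h • fun j => F (h * j)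

theorem charTwist_apply (χ : DirichletCharacter ℂ q) (F : ZMod q → ℂ) (j : ZMod q) :
    charTwist χ F j = ∑ h : (ZMod q)ˣ, χ h * F (h * j) := by
  simp [charTwist]

theorem charTwist_unit_mul (χ : DirichletCharacter ℂ q) (F : ZMod q → ℂ) (u : (ZMod q)ˣ)
    (j : ZMod q) : charTwist χ F (u * j) = χ⁻¹ u * charTwist χ F j := by
  rw [charTwist_apply, charTwist_apply, ← Equiv.sum_comp (Equiv.mulRight u⁻¹), mul_sum]
  refine sum_congr rfl fun h _ => ?_
  rw [Equiv.coe_mulRight, Units.val_mul, map_mul, MulChar.inv_apply, Ring.inverse_unit,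
    mul_assoc (h : ZMod q), Units.inv_mul_cancel_left]
  ring

theorem sum_charTwist (χ : DirichletCharacter ℂ q) {F : ZMod q → ℂ} (h0 : ∑ j, F j = 0) :
    ∑ j, charTwist χ F j = 0 := by
  simp_rw [charTwist_apply]
  rw [sum_comm]
  exact sum_eq_zero fun h _ => by rw [← mul_sum, sum_comp_unit_mul, h0, mul_zero]

theorem sum_char_inv_smul_charTwist (F : ZMod q → ℂ) (a : (ZMod q)ˣ) :
    ∑ χ : DirichletCharacter ℂ q, χ ((a : ZMod q)⁻¹) • charTwist χ F =
      (q.totient : ℂ) • fun j => F (a * j) := by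
  simp_rw [charTwist, smul_sum]
  rw [sum_comm]
  simp_rw [smul_smul, ← sum_smul, DirichletCharacter.sum_char_inv_mul_char_eq ℂ a.isUnit]
  rw [Fintype.sum_eq_single a fun b hb => by rw [if_neg (Units.ext_iff.not.1 hb.symm), zero_smul],
    if_pos rfl]

theorem forall_map_charTwist_eq_zero_iff (Λ : (ZMod q → ℂ) →ₗ[ℂ] ℂ) (F : ZMod q → ℂ) :
    (∀ χ : DirichletCharacter ℂ q, Λ (charTwist χ F) = 0) ↔
      ∀ a : (ZMod q)ˣ, Λ (fun j => F (a * j)) = 0 := by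
  refine ⟨fun h a => ?_, fun h χ => by simp [charTwist, h]⟩
  have hinv := congrArg Λ (sum_char_inv_smul_charTwist F a)
  simp only [map_sum, map_smul, h, smul_zero, sum_const_zero] at hinv
  refine (smul_eq_zero.1 hinv.symm).resolve_left ?_
  exact_mod_cast (Nat.totient_pos.2 (NeZero.pos q)).ne'

/-- The functional `Φ ↦ L(1, Φ)`. -/
noncomputable def lValue (q : ℕ) [NeZero q] : (ZMod q → ℂ) →ₗ[ℂ] ℂ where
  toFun Φ := ZMod.LFunction Φ 1
  map_add' Φ Ψ := by simp [ZMod.LFunction, add_mul, sum_add_distrib, mul_add]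
  map_smul' c Φ := by simp [ZMod.LFunction, mul_sum, mul_assoc, mul_left_comm]

theorem forall_lValue_comp_unit_mul_eq_zero_iff {F : ZMod q → ℂ} (h0 : ∑ j, F j = 0) :
    (∀ a : (ZMod q)ˣ, lValue q (fun j => F (a * j)) = 0) ↔
      (∀ a : (ZMod q)ˣ, factoredSum q (fun j => F (a * j)) = 0) ∧
        lValue q (charTwist 1 F) = 0 := by
  have hnontrivial {χ : DirichletCharacter ℂ q} (hχ : χ ≠ 1) :
      lValue q (charTwist χ F) = 0 ↔ factoredSum q (charTwist χ F) = 0 := by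
    change ZMod.LFunction _ 1 = 0 ↔ _
    rw [LFunction_one_eq_factoredSum_mul (charTwist_unit_mul χ F) (inv_ne_one.2 hχ)
      (sum_charTwist χ h0), mul_eq_zero_iff_right]
    exact DirichletCharacter.LFunction_apply_one_ne_zero (inv_ne_one.2 hχ)
  have htrivial : factoredSum q (charTwist 1 F) = 0 :=
    factoredSum_eq_zero_of_unit_invariant (fun u j => by simp [charTwist_unit_mul])
      (sum_charTwist 1 h0)
  simp_rw [← forall_map_charTwist_eq_zero_iff]
  refine ⟨fun h => ⟨fun χ => ?_, h 1⟩, fun h χ => ?_⟩ <;> rcases eq_or_ne χ 1 with rfl | hχ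
  exacts [htrivial, (hnontrivial hχ).1 (h χ), h.2, (hnontrivial hχ).2 (h.1 χ)]

end CharacterDecomposition

section TruncatedValuation

theorem sum_Icc_filter_dvd {M : Type*} [AddCommMonoid M] {d : ℕ} (hd : 0 < d) (N : ℕ)
    (h : ℕ → M) : ∑ r ∈ Icc 1 (d * N) with d ∣ r, h r = ∑ k ∈ Icc 1 N, h (d * k) := by
  refine (sum_nbij (d * ·) (fun k hk => ?_) (fun _ _ _ _ => Nat.eq_of_mul_eq_mul_left hd) ?_
    fun _ _ => rfl).symm
  · rw [mem_Icc] at hk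
    exact mem_filter.2 ⟨mem_Icc.2 ⟨Nat.mul_pos hd hk.1, Nat.mul_le_mul_left d hk.2⟩,
      dvd_mul_right d k⟩
  · intro r hr
    obtain ⟨hr, k, rfl⟩ := mem_filter.1 hr
    rw [mem_Icc] at hr
    exact ⟨k, mem_Icc.2 ⟨Nat.pos_of_mul_pos_left hr.1, Nat.le_of_mul_le_mul_left hr.2 hd⟩, rfl⟩

/-- The weight `ε(r, p)` of condition (ii), where `b` stands for `v_p(q)`. -/
noncomputable def truncatedValuation (p b r : ℕ) : ℝ :=
  if r.factorization p < b then (r.factorization p : ℝ) else (b : ℝ) + 1 / ((p : ℝ) - 1)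

theorem truncatedValuation_mul (p b : ℕ) {e k : ℕ} (he : e ≠ 0) (hk : k ≠ 0) :
    truncatedValuation p (e.factorization p + b) (e * k) =
      e.factorization p + truncatedValuation p b k := by
  simp only [truncatedValuation, Nat.factorization_mul he hk, Finsupp.add_apply,
    Nat.add_lt_add_iff_left]
  split_ifs <;> push_cast <;> ring

theorem truncatedValuation_gcd (p : ℕ) {q r : ℕ} (hq : q ≠ 0) (hr : r ≠ 0) :
    truncatedValuation p (q.factorization p) (r.gcd q) =
      truncatedValuation p (q.factorization p) r := by
  simp only [truncatedValuation, Nat.factorization_gcd hr hq, Finsupp.inf_apply, inf_lt_right,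
    not_le]
  split_ifs with h
  · rw [inf_eq_left.2 h.le]
  · rfl

theorem truncatedValuation_eq_zero_of_not_dvd {p b r : ℕ} (hb : 0 < b) (hpr : ¬ p ∣ r) :
    truncatedValuation p b r = 0 := by
  simp [truncatedValuation, Nat.factorization_eq_zero_of_not_dvd hpr, hb]

theorem sum_truncatedValuation_prime_pow_mul {p : ℕ} (hp : p.Prime) (b M : ℕ) :
    ∑ k ∈ Icc 1 (p ^ b * M), truncatedValuation p b k = (p ^ b * M : ℕ) / ((p : ℝ) - 1) := by
  have hp1 : (p : ℝ) - 1 ≠ 0 := sub_ne_zero.2 (by exact_mod_cast hp.ne_one)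
  induction b with
  | zero => simp [truncatedValuation, div_eq_mul_inv]
  | succ b ih =>
    have hshift {k : ℕ} (hk : k ∈ Icc 1 (p ^ b * M)) :
        truncatedValuation p (b + 1) (p * k) = 1 + truncatedValuation p b k := by
      have hmul := truncatedValuation_mul p b hp.ne_zero (Nat.one_le_iff_ne_zero.1 (mem_Icc.1 hk).1)
      rwa [hp.factorization_self, add_comm 1 b, Nat.cast_one] at hmul
    rw [pow_succ', mul_assoc, ← sum_filter_of_ne (p := (p ∣ ·)), sum_Icc_filter_dvd hp.pos,
      sum_congr rfl fun k hk => hshift hk, sum_add_distrib, ih, sum_const, Nat.card_Icc]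
    · push_cast
      field_simp
      simp only [nsmul_eq_mul, Nat.cast_mul, Nat.cast_pow, mul_one]
      ring
    · exact fun k _ => not_imp_comm.1 (truncatedValuation_eq_zero_of_not_dvd b.succ_pos)

theorem sum_truncatedValuation {p : ℕ} (hp : p.Prime) (N : ℕ) :
    ∑ k ∈ Icc 1 N, truncatedValuation p (N.factorization p) k = N / ((p : ℝ) - 1) := by
  have hsum := sum_truncatedValuation_prime_pow_mul hp (N.factorization p)
    (N / p ^ N.factorization p)
  rwa [Nat.ordProj_mul_ordCompl_eq_self N p] at hsum

theorem sum_filter_dvd_truncatedValuation {p q e : ℕ} (hp : p.Prime) (hq : q ≠ 0) (he : e ∣ q) :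
    ∑ r ∈ Icc 1 q with e ∣ r, truncatedValuation p (q.factorization p) r =
      q / e * (e.factorization p + 1 / ((p : ℝ) - 1)) := by
  obtain ⟨N, rfl⟩ := he
  have he0 : e ≠ 0 := left_ne_zero_of_mul hq
  rw [sum_Icc_filter_dvd (Nat.pos_of_ne_zero he0),
    Nat.factorization_mul he0 (right_ne_zero_of_mul hq), Finsupp.add_apply,
    sum_congr rfl fun k hk =>
      truncatedValuation_mul p _ he0 (Nat.one_le_iff_ne_zero.1 (mem_Icc.1 hk).1),
    sum_add_distrib, sum_truncatedValuation hp, sum_const, Nat.card_Icc]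
  have : (e : ℝ) ≠ 0 := Nat.cast_ne_zero.2 he0
  simp only [add_tsub_cancel_right, nsmul_eq_mul, Nat.cast_mul]
  field_simp

end TruncatedValuation

section LogPrimes

theorem log_prod_prime_pow {s : Finset ℕ} (hs : ∀ p ∈ s, p.Prime) (a : ℕ → ℕ) :
    Real.log (∏ p ∈ s, p ^ a p : ℕ) = ∑ p ∈ s, a p * Real.log p := by
  rw [Nat.cast_prod, Real.log_prod fun p hp => Nat.cast_ne_zero.2 (pow_ne_zero _ (hs p hp).ne_zero)]
  simp only [Nat.cast_pow, Real.log_pow]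

theorem factorization_prod_prime_pow {s : Finset ℕ} (hs : ∀ p ∈ s, p.Prime) (a : ℕ → ℕ) {p : ℕ}
    (hp : p ∈ s) : (∏ r ∈ s, r ^ a r).factorization p = a p := by
  rw [Nat.factorization_prod fun r hr => pow_ne_zero _ (hs r hr).ne_zero, Finset.sum_apply',
    sum_eq_single_of_mem p hp]
  · simp [(hs p hp).factorization_pow]
  · intro r hr hrp
    simp [(hs r hr).factorization_pow, hrp.symm]

theorem linearIndepOn_log_primes : LinearIndepOn ℚ (fun n : ℕ => Real.log n) {p | p.Prime} := by
  suffices LinearIndepOn ℤ (fun n : ℕ => Real.log n) {p | p.Prime} from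
    (LinearIndependent.iff_fractionRing ℤ ℚ).1 this
  rw [linearIndepOn_iff']
  intro s z hs hz p hp
  have hlog : ∑ p ∈ s, ((z p).toNat : ℝ) * Real.log p =
      ∑ p ∈ s, ((-z p).toNat : ℝ) * Real.log p := by
    rw [← sub_eq_zero, ← sum_sub_distrib, ← hz]
    refine sum_congr rfl fun p _ => ?_
    rw [← sub_mul, zsmul_eq_mul]
    exact_mod_cast congrArg (fun n : ℤ => (n : ℝ) * Real.log p) (Int.toNat_sub_toNat_neg (z p))
  have hpos (a : ℕ → ℕ) : (0 : ℝ) < (∏ p ∈ s, p ^ a p : ℕ) :=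
    Nat.cast_pos.2 (prod_pos fun p hp => pow_pos (hs hp).pos _)
  rw [← log_prod_prime_pow @hs fun p => (z p).toNat,
    ← log_prod_prime_pow @hs fun p => (-z p).toNat] at hlog
  have hprod := Nat.cast_injective (Real.log_injOn_pos (hpos _) (hpos _) hlog)
  have hz_toNat := congrArg (fun n => n.factorization p) hprod
  simp only [factorization_prod_prime_pow @hs _ hp] at hz_toNat
  omega

end LogPrimes

section UnitInvariant

variable {q : ℕ}

/-- The expansion `Φ(n) = ∑_{e ∣ gcd(n, q)} G(e)` of a function on `ZMod q` as a divisor sum. -/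
def IsDivisorExpansion {R : Type*} [AddCommMonoid R] (Φ : ZMod q → R) (G : ℕ → R) : Prop :=
  ∀ n : ℕ, Φ n = ∑ e ∈ (n.gcd q).divisors, G e

theorem IsDivisorExpansion.ratCast {Φ : ZMod q → ℚ} {G : ℕ → ℚ} (hG : IsDivisorExpansion Φ G)
    (R : Type*) [DivisionRing R] [CharZero R] :
    IsDivisorExpansion (fun j => (Φ j : R)) fun e => (G e : R) :=
  fun n => by simp only [hG n, Rat.cast_sum]

variable [NeZero q]

theorem exists_natCast_eq_unit_mul_gcd (n : ℕ) :
    ∃ u : (ZMod q)ˣ, (n : ZMod q) = u * (n.gcd q : ℕ) := by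
  obtain ⟨d, hd, _, ⟨u, rfl⟩, hn⟩ := ZMod.eq_unit_mul_divisor (n : ZMod q)
  have hmod : n ≡ (u : ZMod q).val * d [MOD q] := by
    rw [← ZMod.natCast_eq_natCast_iff, hn]
    simp
  have hgcd : n.gcd q = d := by
    rw [hmod.gcd_eq, (ZMod.val_coe_unit_coprime u).gcd_mul_left_cancel, Nat.gcd_eq_left hd]
  exact ⟨u, hgcd.symm ▸ hn⟩

theorem gcd_val_unit_mul (u : (ZMod q)ˣ) (x : ZMod q) :
    (u * x : ZMod q).val.gcd q = x.val.gcd q := by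
  have hmod : (u * x : ZMod q).val ≡ (u : ZMod q).val * x.val [MOD q] := by
    rw [← ZMod.natCast_eq_natCast_iff]
    simp
  rw [hmod.gcd_eq, (ZMod.val_coe_unit_coprime u).gcd_mul_left_cancel]

theorem sum_Icc_natCast_zmod {M : Type*} [AddCommMonoid M] (H : ZMod q → M) :
    ∑ r ∈ Icc 1 q, H r = ∑ x, H x := by
  have hinj : Set.InjOn (fun r : ℕ => (r : ZMod q)) (Icc 1 q) := fun a ha b hb hab => by
    rw [mem_coe, mem_Icc] at ha hb
    exact ((ZMod.natCast_eq_natCast_iff a b q).1 hab).eq_of_abs_lt (by rw [abs_lt]; omega)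
  have himage : (Icc 1 q).image (fun r : ℕ => (r : ZMod q)) = univ :=
    eq_univ_of_card _ (by rw [card_image_of_injOn hinj, Nat.card_Icc, ZMod.card]; simp)
  rw [← himage, sum_image hinj]

theorem exists_isDivisorExpansion {R : Type*} [CommRing R] {Φ : ZMod q → R}
    (hΦ : ∀ (u : (ZMod q)ˣ) j, Φ (u * j) = Φ j) : ∃ G, IsDivisorExpansion Φ G := by
  refine ⟨fun n => ∑ x ∈ n.divisorsAntidiagonal,
    (ArithmeticFunction.moebius x.fst : R) * Φ x.snd, fun n => ?_⟩
  obtain ⟨u, hu⟩ := exists_natCast_eq_unit_mul_gcd (q := q) n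
  rw [hu, hΦ]
  exact ((ArithmeticFunction.sum_eq_iff_sum_mul_moebius_eq (g := fun n : ℕ => Φ n)).2
    (fun _ _ => rfl) _ (Nat.gcd_pos_of_pos_right n (NeZero.pos q))).symm

namespace IsDivisorExpansion

theorem sum_Icc_mul {R : Type*} [CommSemiring R] {Φ : ZMod q → R} {G : ℕ → R}
    (hG : IsDivisorExpansion Φ G) (w : ℕ → R) :
    ∑ r ∈ Icc 1 q, Φ r * w r = ∑ e ∈ q.divisors, G e * ∑ r ∈ Icc 1 q with e ∣ r, w r := by
  simp_rw [hG _, sum_mul, mul_sum]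
  refine sum_comm' fun r e => ?_
  simp only [Nat.mem_divisors, mem_filter, Nat.dvd_gcd_iff]
  have := NeZero.ne q
  simp only [ne_eq, Nat.gcd_eq_zero_iff]
  tauto

theorem sum_eq_mul_sum_div {R : Type*} [Field R] [CharZero R] {Φ : ZMod q → R} {G : ℕ → R}
    (hG : IsDivisorExpansion Φ G) : ∑ j, Φ j = q * ∑ e ∈ q.divisors, G e / e := by
  rw [← sum_Icc_natCast_zmod, mul_sum]
  have hswap := hG.sum_Icc_mul fun _ => 1
  simp only [mul_one] at hswap
  rw [hswap]
  refine sum_congr rfl fun e he => ?_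
  have he0 : (e : R) ≠ 0 := Nat.cast_ne_zero.2 (Nat.pos_of_mem_divisors he).ne'
  obtain ⟨N, hN⟩ := Nat.dvd_of_mem_divisors he
  rw [hN, sum_Icc_filter_dvd (Nat.pos_of_mem_divisors he), sum_const, Nat.card_Icc]
  push_cast
  field_simp
  simp

theorem convolution_indicator_divisors {Φ : ZMod q → ℂ} {G : ℕ → ℂ}
    (hG : IsDivisorExpansion Φ G) {n : ℕ} (hn : n ≠ 0) :
    LSeries.convolution ((q.divisors : Set ℕ).indicator G) 1 n = Φ n := by
  rw [LSeries.convolution_def, hG n]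
  simp only [Pi.one_apply, mul_one]
  rw [Nat.sum_divisorsAntidiagonal (fun a _ => (q.divisors : Set ℕ).indicator G a)]
  simp only [Set.indicator_apply, mem_coe]
  rw [← sum_filter]
  refine sum_congr ?_ fun _ _ => rfl
  ext e
  simp [hn, Nat.dvd_gcd_iff, NeZero.ne q, and_comm]

theorem LFunction_eq_sum_mul_riemannZeta {Φ : ZMod q → ℂ} {G : ℕ → ℂ}
    (hG : IsDivisorExpansion Φ G) {s : ℂ} (hs : 1 < s.re) :
    ZMod.LFunction Φ s = (∑ e ∈ q.divisors, G e * (e : ℂ) ^ (-s)) * riemannZeta s := by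
  have hsupp {e : ℕ} (he : e ∉ q.divisors) :
      LSeries.term ((q.divisors : Set ℕ).indicator G) s e = 0 := by
    simp [LSeries.term, he]
  have hpoly : LSeries ((q.divisors : Set ℕ).indicator G) s =
      ∑ e ∈ q.divisors, G e * (e : ℂ) ^ (-s) := by
    rw [LSeries, tsum_eq_sum fun e => hsupp]
    refine sum_congr rfl fun e he => ?_
    rw [LSeries.term_of_ne_zero (Nat.pos_of_mem_divisors he).ne', Complex.cpow_neg,
      div_eq_mul_inv, Set.indicator_of_mem (mem_coe.2 he)]
  rw [ZMod.LFunction_eq_LSeries Φ hs, ← LSeries_one_eq_riemannZeta hs, ← hpoly,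
    ← LSeries_convolution' (summable_of_ne_finset_zero fun e => hsupp)
      (LSeriesSummable_one_iff.2 hs)]
  exact LSeries_congr (fun hn => (hG.convolution_indicator_divisors hn).symm) s

-- The simple zero of the Dirichlet polynomial at `1` cancels the pole of `ζ`, so the value there
-- is the derivative of the polynomial.
theorem LFunction_one_eq_neg_sum_log {Φ : ZMod q → ℂ} {G : ℕ → ℂ} (hG : IsDivisorExpansion Φ G)
    (hG0 : ∑ e ∈ q.divisors, G e / e = 0) :
    ZMod.LFunction Φ 1 = -∑ e ∈ q.divisors, G e / e * Real.log e := by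
  let P : ℂ → ℂ := fun s => ∑ e ∈ q.divisors, G e * (e : ℂ) ^ (-s)
  have hP1 : P 1 = 0 := by simpa only [P, Complex.cpow_neg_one, ← div_eq_mul_inv] using hG0
  have hderiv : HasDerivAt P (-∑ e ∈ q.divisors, G e / e * Real.log e) 1 := by
    rw [← sum_neg_distrib]
    refine HasDerivAt.fun_sum fun e he => ?_
    have he0 : (e : ℂ) ≠ 0 := Nat.cast_ne_zero.2 (Nat.pos_of_mem_divisors he).ne'
    refine (((hasDerivAt_neg (1 : ℂ)).const_cpow (Or.inl he0)).const_mul (G e)).congr_deriv ?_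
    rw [Complex.cpow_neg_one, Complex.ofReal_log e.cast_nonneg, Complex.ofReal_natCast]
    ring
  have hlim := (hderiv.tendsto_slope.mul riemannZeta_residue_one).comp tendsto_ofReal_nhdsGT_one
  rw [mul_one] at hlim
  have hΦ0 : ∑ j, Φ j = 0 := by rw [hG.sum_eq_mul_sum_div, hG0, mul_zero]
  refine tendsto_nhds_unique (tendsto_LFunction_nhdsGT_one hΦ0) (hlim.congr' ?_)
  filter_upwards [self_mem_nhdsWithin] with s hs
  have hs1 : (s : ℂ) - 1 ≠ 0 := sub_ne_zero.2 (Complex.ofReal_ne_one.2 (ne_of_gt hs))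
  rw [hG.LFunction_eq_sum_mul_riemannZeta (by simpa using hs), Function.comp_apply,
    slope_def_field, hP1, sub_zero, ← mul_assoc, div_mul_cancel₀ _ hs1]

theorem sum_mul_truncatedValuation {Φ : ZMod q → ℝ} {G : ℕ → ℝ} (hG : IsDivisorExpansion Φ G)
    (hG0 : ∑ e ∈ q.divisors, G e / e = 0) {p : ℕ} (hp : p.Prime) :
    ∑ r ∈ Icc 1 q, Φ r * truncatedValuation p (q.factorization p) r =
      q * ∑ e ∈ q.divisors, G e / e * e.factorization p := by
  have hterm {e : ℕ} (he : e ∈ q.divisors) :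
      G e * ∑ r ∈ Icc 1 q with e ∣ r, truncatedValuation p (q.factorization p) r =
        q * (G e / e * e.factorization p) + q * (1 / ((p : ℝ) - 1)) * (G e / e) := by
    rw [sum_filter_dvd_truncatedValuation hp (NeZero.ne q) (Nat.dvd_of_mem_divisors he)]
    ring
  rw [hG.sum_Icc_mul, sum_congr rfl fun e he => hterm he, sum_add_distrib, ← mul_sum, ← mul_sum,
    hG0, mul_zero, add_zero]

end IsDivisorExpansion

theorem log_eq_sum_primeFactors_of_dvd {e q : ℕ} (hq : q ≠ 0) (he : e ∣ q) :
    Real.log e = ∑ p ∈ q.primeFactors, e.factorization p * Real.log p := by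
  rw [Real.log_nat_eq_sum_factorization]
  exact Finsupp.sum_of_support_subset _ (Nat.primeFactors_mono he hq) _ (by simp)

theorem sum_divisors_mul_log (g : ℕ → ℝ) :
    ∑ e ∈ q.divisors, g e * Real.log e =
      ∑ p ∈ q.primeFactors, (∑ e ∈ q.divisors, g e * e.factorization p) * Real.log p := by
  simp_rw [sum_mul, mul_assoc]
  rw [sum_comm]
  refine sum_congr rfl fun e he => ?_
  rw [log_eq_sum_primeFactors_of_dvd (NeZero.ne q) (Nat.dvd_of_mem_divisors he), mul_sum]

theorem LFunction_one_eq_zero_iff_of_unit_invariant {Φ : ZMod q → ℚ}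
    (hΦ : ∀ (u : (ZMod q)ˣ) j, Φ (u * j) = Φ j) (h0 : ∑ j, Φ j = 0) :
    ZMod.LFunction (fun j => (Φ j : ℂ)) 1 = 0 ↔ ∀ p ∈ q.primeFactors,
      ∑ r ∈ Icc 1 q, (Φ r : ℝ) * truncatedValuation p (q.factorization p) r = 0 := by
  obtain ⟨G, hG⟩ := exists_isDivisorExpansion hΦ
  have hq : (q : ℝ) ≠ 0 := NeZero.ne _
  have hG0 : ∑ e ∈ q.divisors, G e / e = 0 := by
    rw [hG.sum_eq_mul_sum_div] at h0
    exact (mul_eq_zero.1 h0).resolve_left (NeZero.ne _)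
  let c (p : ℕ) : ℚ := ∑ e ∈ q.divisors, G e / e * e.factorization p
  have hε {p : ℕ} (hp : p ∈ q.primeFactors) :
      ∑ r ∈ Icc 1 q, (Φ r : ℝ) * truncatedValuation p (q.factorization p) r = q * c p := by
    rw [(hG.ratCast ℝ).sum_mul_truncatedValuation (by exact_mod_cast hG0)
      (Nat.prime_of_mem_primeFactors hp)]
    simp [c]
  have hL : ZMod.LFunction (fun j => (Φ j : ℂ)) 1 =
      -(∑ p ∈ q.primeFactors, c p * Real.log p : ℝ) := by
    rw [(hG.ratCast ℂ).LFunction_one_eq_neg_sum_log (by exact_mod_cast hG0), neg_inj]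
    simp only [c, Rat.cast_sum, Rat.cast_mul, Rat.cast_div, Rat.cast_natCast]
    rw [← sum_divisors_mul_log]
    push_cast
    rfl
  rw [hL, neg_eq_zero, Complex.ofReal_eq_zero]
  refine ⟨fun h p hp => ?_, fun h => sum_eq_zero fun p hp => ?_⟩
  · rw [hε hp, linearIndepOn_iff'.1 linearIndepOn_log_primes q.primeFactors c
      (fun p hp => Nat.prime_of_mem_primeFactors hp)
      (by simpa only [Rat.smul_def] using h) p hp, Rat.cast_zero, mul_zero]
  · rw [(mul_eq_zero.1 ((hε hp).symm.trans (h p hp))).resolve_left hq, zero_mul]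

end UnitInvariant

section OkadaCriterion

theorem exists_zmod_of_periodic {α : Type*} {q : ℕ} [NeZero q] {f : ℕ → α}
    (hf : ∀ n, 1 ≤ n → f (n + q) = f n) : ∃ F : ZMod q → α, ∀ n : ℕ, 1 ≤ n → f n = F n := by
  have hper : Function.Periodic (fun n => f (n + q)) q :=
    fun n => hf _ (Nat.le_add_left_of_le NeZero.one_le)
  refine ⟨fun x => f (x.val + q), fun n hn => ?_⟩
  simp only [ZMod.val_natCast]
  rw [← hf n hn]
  exact (hper.map_mod_nat n).symm

theorem mem_factoredBy_iff {q b : ℕ} (hq : q ≠ 0) :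
    b ∈ factoredBy q ↔ 0 < b ∧ ∀ p : ℕ, p.Prime → p ∣ b → p ∣ q := by
  refine ⟨fun hb => ⟨Nat.pos_of_ne_zero (Nat.ne_zero_of_mem_factoredNumbers hb),
    fun p hp hpb => Nat.dvd_of_mem_primeFactors (Nat.mem_factoredNumbers'.1 hb p hp hpb)⟩,
    fun hb => Nat.mem_factoredNumbers'.2 fun p hp hpb => ?_⟩
  exact Nat.mem_primeFactors.2 ⟨hp, hb.2 p hp hpb, hq⟩

variable {q : ℕ} [NeZero q]

theorem forall_unit_iff_forall_coprime (hq : 2 ≤ q) {P : ZMod q → Prop} :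
    (∀ u : (ZMod q)ˣ, P u) ↔ ∀ a : ℕ, 1 ≤ a → a < q → a.gcd q = 1 → P a := by
  refine ⟨fun h a _ _ ha => by simpa using h (ZMod.unitOfCoprime a ha), fun h u => ?_⟩
  have hu : (u : ZMod q).val.Coprime q := ZMod.val_coe_unit_coprime u
  have hpos : 1 ≤ (u : ZMod q).val := Nat.one_le_iff_ne_zero.2 fun h0 => by
    rw [h0, Nat.coprime_zero_left] at hu
    omega
  simpa using h _ hpos (ZMod.val_lt _) hu

theorem factoredSum_ratCast (F : ZMod q → ℚ) :
    factoredSum q (fun j => (F j : ℂ)) =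
      (∑' m : {b : ℕ // 0 < b ∧ ∀ p : ℕ, p.Prime → p ∣ b → p ∣ q},
        (F (m : ℕ) : ℝ) / (m : ℕ) : ℝ) := by
  rw [factoredSum_apply, Complex.ofReal_tsum,
    ← (Equiv.subtypeEquivRight fun b => mem_factoredBy_iff (q := q) (b := b) (NeZero.ne q)).tsum_eq]
  simp

theorem sum_Icc_mul_truncatedValuation_eq_sum (F : ZMod q → ℝ) (p : ℕ) :
    ∑ r ∈ Icc 1 q, F r * truncatedValuation p (q.factorization p) r =
      ∑ x, F x * truncatedValuation p (q.factorization p) (x.val.gcd q) := by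
  rw [← sum_Icc_natCast_zmod]
  refine sum_congr rfl fun r hr => ?_
  rw [ZMod.val_natCast, ← Nat.gcd_rec, Nat.gcd_comm,
    truncatedValuation_gcd p (NeZero.ne q) (Nat.one_le_iff_ne_zero.1 (mem_Icc.1 hr).1)]

theorem sum_Icc_sum_unit_mul_truncatedValuation (F : ZMod q → ℝ) (p : ℕ) :
    ∑ r ∈ Icc 1 q, (∑ h : (ZMod q)ˣ, F (h * r)) * truncatedValuation p (q.factorization p) r =
      q.totient * ∑ r ∈ Icc 1 q, F r * truncatedValuation p (q.factorization p) r := by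
  have hinv (h : (ZMod q)ˣ) :
      ∑ x, F (h * x) * truncatedValuation p (q.factorization p) (x.val.gcd q) =
        ∑ x, F x * truncatedValuation p (q.factorization p) (x.val.gcd q) := by
    rw [← sum_comp_unit_mul (fun x => F x * _) h]
    simp only [gcd_val_unit_mul]
  rw [sum_Icc_mul_truncatedValuation_eq_sum (fun x : ZMod q => ∑ h : (ZMod q)ˣ, F (h * x)),
    sum_Icc_mul_truncatedValuation_eq_sum]
  simp_rw [sum_mul]
  rw [sum_comm, sum_congr rfl fun h _ => hinv h, sum_const, card_univ, ZMod.card_units_eq_totient,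
    nsmul_eq_mul]

theorem sum_filter_one_lt_gcd_mul_truncatedValuation (f : ℕ → ℝ) {p : ℕ}
    (hp : p ∈ q.primeFactors) :
    ∑ r ∈ Icc 1 q with 1 < r.gcd q, f r * truncatedValuation p (q.factorization p) r =
      ∑ r ∈ Icc 1 q, f r * truncatedValuation p (q.factorization p) r := by
  obtain ⟨hprime, hpq, -⟩ := Nat.mem_primeFactors.1 hp
  refine sum_filter_of_ne fun r _ hr => ?_
  have hpr : p ∣ r := by
    by_contra hpr
    rw [truncatedValuation_eq_zero_of_not_dvd
      (hprime.factorization_pos_of_dvd (NeZero.ne q) hpq) hpr, mul_zero] at hr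
    exact hr rfl
  exact hprime.one_lt.trans_le
    (Nat.le_of_dvd (Nat.gcd_pos_of_pos_right r (NeZero.pos q)) (Nat.dvd_gcd hpr hpq))

theorem LFunction_one_eq_zero_iff_forall {F : ZMod q → ℚ} (h0 : ∑ j, F j = 0) :
    ZMod.LFunction (fun j => (F j : ℂ)) 1 = 0 ↔
      (∀ u : (ZMod q)ˣ, factoredSum q (fun j => (F (u * j) : ℂ)) = 0) ∧
        ∀ p ∈ q.primeFactors,
          ∑ r ∈ Icc 1 q, (F r : ℝ) * truncatedValuation p (q.factorization p) r = 0 := by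
  have hgalois : ZMod.LFunction (fun j => (F j : ℂ)) 1 = 0 ↔
      ∀ u : (ZMod q)ˣ, lValue q (fun j => (F (u * j) : ℂ)) = 0 := by
    refine ⟨LFunction_one_comp_unit_mul_eq_zero h0, fun h => ?_⟩
    have h1 := h 1
    simp only [Units.val_one, one_mul] at h1
    exact h1
  let Φ (j : ZMod q) : ℚ := ∑ h : (ZMod q)ˣ, F (h * j)
  have hΦ (u : (ZMod q)ˣ) (j : ZMod q) : Φ (u * j) = Φ j := by
    simp only [Φ, ← mul_assoc, ← Units.val_mul]
    exact Equiv.sum_comp (Equiv.mulRight u) fun h : (ZMod q)ˣ => F (h * j)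
  have hΦ0 : ∑ j, Φ j = 0 := by
    rw [sum_comm]
    exact sum_eq_zero fun h _ => (sum_comp_unit_mul F h).trans h0
  have htwist : charTwist 1 (fun j => (F j : ℂ)) = fun j => (Φ j : ℂ) := by
    ext j
    simp [Φ, charTwist_apply]
  have htotient : (q.totient : ℝ) ≠ 0 := Nat.cast_ne_zero.2 (Nat.totient_pos.2 (NeZero.pos q)).ne'
  have htrivial : lValue q (fun j => (Φ j : ℂ)) = 0 ↔ _ :=
    LFunction_one_eq_zero_iff_of_unit_invariant hΦ hΦ0
  rw [hgalois, forall_lValue_comp_unit_mul_eq_zero_iff (F := fun j => (F j : ℂ))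
    (by exact_mod_cast h0), htwist, htrivial]
  simp only [Φ, Rat.cast_sum, sum_Icc_sum_unit_mul_truncatedValuation fun j => (F j : ℝ),
    mul_eq_zero, htotient, false_or]

theorem eq_zero_iff_LFunction_one_eq_zero_of_tendsto {F : ZMod q → ℚ} (h0 : ∑ j, F j = 0) {L : ℝ}
    (hL : Tendsto (fun N : ℕ => ∑ n ∈ Icc 1 N, (F n : ℝ) / n) atTop (𝓝 L)) :
    L = 0 ↔ ZMod.LFunction (fun j => (F j : ℂ)) 1 = 0 := by
  have hLc := (Complex.continuous_ofReal.tendsto L).comp hL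
  rw [LFunction_one_eq_of_tendsto (l := L) (by exact_mod_cast h0)
    (by simpa [Function.comp_def] using hLc), Complex.ofReal_eq_zero]

end OkadaCriterion

theorem okada_criterion (q : ℕ) (hq : 2 ≤ q) (f : ℕ → ℚ)
    (hper : ∀ n : ℕ, 1 ≤ n → f (n + q) = f n)
    (hsum0 : ∑ a ∈ Finset.Icc 1 q, f a = 0)
    (L : ℝ)
    (hL : Tendsto (fun N : ℕ => ∑ n ∈ Finset.Icc 1 N, (f n : ℝ) / n) atTop (nhds L)) :
    L = 0 ↔
      ((∀ a : ℕ, 1 ≤ a → a < q → Nat.gcd a q = 1 →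
        ∑' m : {b : ℕ // 0 < b ∧ ∀ p : ℕ, p.Prime → p ∣ b → p ∣ q},
          (f (a * (m : ℕ)) : ℝ) / ((m : ℕ) : ℝ) = 0) ∧
       (∀ p : ℕ, p.Prime → p ∣ q →
        ∑ r ∈ (Finset.Icc 1 q).filter (fun r => 1 < Nat.gcd r q),
          (f r : ℝ) * (if r.factorization p < q.factorization p
            then (r.factorization p : ℝ)
            else (q.factorization p : ℝ) + 1 / ((p : ℝ) - 1)) = 0)) := by
  have : NeZero q := ⟨by omega⟩
  obtain ⟨F, hF⟩ := exists_zmod_of_periodic hper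
  have h0 : ∑ j, F j = 0 := by
    rw [← sum_Icc_natCast_zmod, ← hsum0]
    exact sum_congr rfl fun r hr => (hF r (mem_Icc.1 hr).1).symm
  rw [eq_zero_iff_LFunction_one_eq_zero_of_tendsto h0 (hL.congr fun N =>
    sum_congr rfl fun n hn => by rw [hF n (mem_Icc.1 hn).1]), LFunction_one_eq_zero_iff_forall h0,
    forall_unit_iff_forall_coprime (P := fun a => factoredSum q (fun j => (F (a * j) : ℂ)) = 0) hq]
  have hε {p : ℕ} (hp : p ∈ q.primeFactors) :
      ∑ r ∈ Icc 1 q with 1 < r.gcd q, (f r : ℝ) * truncatedValuation p (q.factorization p) r =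
        ∑ r ∈ Icc 1 q, (F r : ℝ) * truncatedValuation p (q.factorization p) r := by
    rw [sum_filter_one_lt_gcd_mul_truncatedValuation (fun r => (f r : ℝ)) hp]
    exact sum_congr rfl fun r hr => by rw [hF r (mem_Icc.1 hr).1]
  refine and_congr (forall₄_congr fun a ha _ _ => ?_)
    ⟨fun h p hp hpq => ?_, fun h p hp => (hε hp).symm.trans <|
      h p (Nat.prime_of_mem_primeFactors hp) (Nat.dvd_of_mem_primeFactors hp)⟩
  · rw [factoredSum_ratCast fun j : ZMod q => F (a * j), Complex.ofReal_eq_zero]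
    simp_rw [← Nat.cast_mul]
    rw [tsum_congr fun m => by rw [← hF _ (Nat.mul_pos ha m.2.1)]]
  · have hpq' : p ∈ q.primeFactors := Nat.mem_primeFactors.2 ⟨hp, hpq, NeZero.ne q⟩
    exact (hε hpq').trans (h p hpq')
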